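/- arXiv:0902.0132 — 2 statements merged into one kernel-verified Lean document; each statement's English description precedes it below -/
import Mathlib

section
/- Two graphons W and W' satisfy t(F,W) = t(F,W') for every finite simple graph F if and only if W and W' are weakly isomorphic, i.e., there exist a graphon U and Lebesgue-measure-preserving maps φ, φ' : [0,1] → [0,1] such that W(x,y) = U(φ(x),φ(y)) for almost every (x,y) and W'(x,y) = U(φ'(x),φ'(y)) for almost every (x,y). -/
open MeasureTheory Set Filter

/-- The Lebesgue measure restricted to `[0,1]`. -/
noncomputable abbrev μ01 : MeasureTheory.Measure ℝ :=
  MeasureTheory.volume.restrict (Set.Icc (0:ℝ) 1)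

/-- A graphon: a symmetric measurable function `[0,1]² → [0,1]`
(defined on all of `ℝ²` for convenience). -/
def IsGraphon (W : ℝ → ℝ → ℝ) : Prop :=
  Measurable (Function.uncurry W) ∧ (∀ x y, W x y = W y x) ∧ ∀ x y, W x y ∈ Set.Icc (0:ℝ) 1

-- The homomorphism density `t(F,W)` of a finite simple graph `F` in a graphon `W`.
open scoped Classical in
noncomputable def homDensity {n : ℕ} (F : SimpleGraph (Fin n)) (W : ℝ → ℝ → ℝ) : ℝ :=
  ∫ x : Fin n → ℝ,
    (∏ p ∈ Finset.univ.filter (fun p : Fin n × Fin n => p.1 < p.2 ∧ F.Adj p.1 p.2),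
      W (x p.1) (x p.2)) ∂(MeasureTheory.Measure.pi fun _ => μ01)

/-- The cut norm `‖U‖_□` of a kernel `U`. -/
noncomputable def cutNorm (U : ℝ → ℝ → ℝ) : ℝ :=
  sSup { r : ℝ | ∃ S T : Set ℝ, MeasurableSet S ∧ MeasurableSet T ∧
    S ⊆ Set.Icc (0:ℝ) 1 ∧ T ⊆ Set.Icc (0:ℝ) 1 ∧
    r = |∫ x in S, ∫ y in T, U x y| }

/-- An invertible measure preserving map of `[0,1]` onto itself. -/
def IsInvMeasurePreserving (φ : ℝ → ℝ) : Prop :=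
  Set.MapsTo φ (Set.Icc (0:ℝ) 1) (Set.Icc (0:ℝ) 1) ∧
  MeasureTheory.MeasurePreserving φ μ01 μ01 ∧
  ∃ ψ : ℝ → ℝ, Set.MapsTo ψ (Set.Icc (0:ℝ) 1) (Set.Icc (0:ℝ) 1) ∧
    MeasureTheory.MeasurePreserving ψ μ01 μ01 ∧
    (∀ x ∈ Set.Icc (0:ℝ) 1, ψ (φ x) = x) ∧ (∀ x ∈ Set.Icc (0:ℝ) 1, φ (ψ x) = x)

/-- The cut distance `δ_□(U,W)` between two graphons. -/
noncomputable def cutDist (U W : ℝ → ℝ → ℝ) : ℝ :=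
  sInf { r : ℝ | ∃ φ : ℝ → ℝ, IsInvMeasurePreserving φ ∧
    r = cutNorm (fun x y => U x y - W (φ x) (φ y)) }

/-- A (not necessarily invertible) measure preserving map `[0,1] → [0,1]`. -/
def IsMeasurePreservingMap (φ : ℝ → ℝ) : Prop :=
  Set.MapsTo φ (Set.Icc (0:ℝ) 1) (Set.Icc (0:ℝ) 1) ∧
  MeasureTheory.MeasurePreserving φ μ01 μ01

/-!
Sample anchors `a i` independently from `μ` and send a point `x` to the sequence of codegrees
`∫ W z (a i) * W z x ∂μ z`. Mixed moments of such codegrees, with or without the edge `W x y`, are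
densities of simple graphs rooted at the anchors, because every factor brings its own path of length
two and no edge is ever repeated. Equality of all homomorphism densities therefore gives the rooted
densities of two graphons the same joint law, so matching anchors can be chosen in any two sets of
full measure.

Almost surely the anchors are dense enough that a function whose integrals against all codegrees
`codegree (a i)` vanish is orthogonal to the range of the codegree operator `T* T`, hence to that of
`T`. So each of the two graphons is a function of its sequence of codegrees, and this function is
the density of one law on pairs of sequences with respect to another; these laws agree for matching
anchors, so both graphons are pulled back from the same kernel on the space of sequences. Sequences
of codegrees are finally replaced by points of `[0,1]` by ranking them, ties being broken by an
injection into the reals.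
-/

section GraphonsOnProbabilitySpaces

/-- A graphon on an arbitrary measurable space: a symmetric measurable kernel with values in
`[0,1]`. -/
structure IsGraphonOn {Ω : Type*} [MeasurableSpace Ω] (W : Ω → Ω → ℝ) : Prop where
  measurable : Measurable (Function.uncurry W)
  symm : ∀ x y, W x y = W y x
  mem_Icc : ∀ x y, W x y ∈ Icc (0 : ℝ) 1

theorem isGraphon_iff_isGraphonOn {W : ℝ → ℝ → ℝ} : IsGraphon W ↔ IsGraphonOn W :=
  ⟨fun ⟨hm, hs, h01⟩ => ⟨hm, hs, h01⟩, fun ⟨hm, hs, h01⟩ => ⟨hm, hs, h01⟩⟩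

open scoped Classical in
/-- The homomorphism density of a finite graph in a kernel on a probability space; `homDensity` is
the case of the unit interval. -/
noncomputable def homDensityOn {Ω : Type*} [MeasurableSpace Ω] (μ : Measure Ω) {n : ℕ}
    (F : SimpleGraph (Fin n)) (W : Ω → Ω → ℝ) : ℝ :=
  ∫ x : Fin n → Ω,
    (∏ p ∈ Finset.univ.filter (fun p : Fin n × Fin n => p.1 < p.2 ∧ F.Adj p.1 p.2),
      W (x p.1) (x p.2)) ∂(Measure.pi fun _ => μ)

variable {Ω : Type*} [MeasurableSpace Ω] {W : Ω → Ω → ℝ}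

theorem IsGraphonOn.measurable_comp (hW : IsGraphonOn W) {α : Type*} [MeasurableSpace α]
    {f g : α → Ω} (hf : Measurable f) (hg : Measurable g) : Measurable fun a => W (f a) (g a) :=
  hW.measurable.comp (hf.prodMk hg)

theorem IsGraphonOn.comp (hW : IsGraphonOn W) {α : Type*} [MeasurableSpace α] {f : α → Ω}
    (hf : Measurable f) : IsGraphonOn fun x y => W (f x) (f y) where
  measurable := hW.measurable_comp (hf.comp measurable_fst) (hf.comp measurable_snd)
  symm _ _ := hW.symm _ _
  mem_Icc _ _ := hW.mem_Icc _ _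

theorem IsGraphonOn.prod_mem_Icc (hW : IsGraphonOn W) {ι : Type*} (s : Finset ι) (f g : ι → Ω) :
    ∏ i ∈ s, W (f i) (g i) ∈ Icc (0 : ℝ) 1 :=
  ⟨Finset.prod_nonneg fun _ _ => (hW.mem_Icc _ _).1,
    Finset.prod_le_one (fun _ _ => (hW.mem_Icc _ _).1) fun _ _ => (hW.mem_Icc _ _).2⟩

theorem IsGraphonOn.measurable_prod (hW : IsGraphonOn W) {α ι : Type*} [MeasurableSpace α]
    (s : Finset ι) {f g : ι → α → Ω} (hf : ∀ i, Measurable (f i)) (hg : ∀ i, Measurable (g i)) :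
    Measurable fun a => ∏ i ∈ s, W (f i a) (g i a) :=
  Finset.measurable_fun_prod _ fun i _ => hW.measurable_comp (hf i) (hg i)

theorem integral_comp_measurePreserving {α β : Type*} [MeasurableSpace α] [MeasurableSpace β]
    {P : Measure α} {Q : Measure β} {φ : α → β} (hφ : MeasurePreserving φ P Q) {f : β → ℝ}
    (hf : Measurable f) : ∫ a, f (φ a) ∂P = ∫ b, f b ∂Q := by
  rw [← hφ.map_eq, integral_map hφ.aemeasurable hf.aestronglyMeasurable]

theorem integral_mem_Icc {α : Type*} [MeasurableSpace α] {P : Measure α} [IsProbabilityMeasure P]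
    {f : α → ℝ} (hf : Measurable f) (h : ∀ a, f a ∈ Icc (0 : ℝ) 1) :
    ∫ a, f a ∂P ∈ Icc (0 : ℝ) 1 :=
  (convex_Icc 0 1).integral_mem isClosed_Icc (ae_of_all _ h)
    (.of_mem_Icc 0 1 hf.aemeasurable (ae_of_all _ h))

end GraphonsOnProbabilitySpaces

section IndependentSamples

variable {Ω : Type*} [MeasurableSpace Ω] (μ : Measure Ω) [IsProbabilityMeasure μ]

/-- The law of a family of independent samples of `μ` indexed by `V`. -/
noncomputable abbrev iid (V : Type*) : Measure (V → Ω) :=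
  Measure.infinitePi fun _ => μ

theorem measurePreserving_comp_iid {V V' : Type*} {c : V' → V} (hc : Function.Injective c) :
    MeasurePreserving (fun z : V → Ω => z ∘ c) (iid μ V) (iid μ V') :=
  ⟨by fun_prop, Measure.map_infinitePi_infinitePi_of_inj hc⟩

theorem measurePreserving_pair_pi {V : Type*} [Fintype V] {i j : V} (hij : i ≠ j) :
    MeasurePreserving (fun z : V → Ω => (z i, z j)) (Measure.pi fun _ => μ) (μ.prod μ) := by
  have hc : Function.Injective ![i, j] := by
    simpa [Function.Injective, Fin.forall_fin_two, eq_comm] using hij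
  have h := measurePreserving_comp_iid μ hc
  rw [iid, iid, Measure.infinitePi_eq_pi, Measure.infinitePi_eq_pi] at h
  exact (measurePreserving_finTwoArrow μ).comp h

theorem measurePreserving_sumElim_iid (V V' : Type*) :
    MeasurePreserving (fun p : (V → Ω) × (V' → Ω) => (Sum.elim p.1 p.2 : V ⊕ V' → Ω))
      ((iid μ V).prod (iid μ V')) (iid μ (V ⊕ V')) := by
  have hm : Measurable fun p : (V → Ω) × (V' → Ω) => (Sum.elim p.1 p.2 : V ⊕ V' → Ω) :=
    measurable_pi_iff.2 (Sum.rec (fun i => (measurable_pi_apply i).comp measurable_fst)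
      fun i => (measurable_pi_apply i).comp measurable_snd)
  refine ⟨hm, Measure.eq_infinitePi _ fun s t ht => ?_⟩
  have hpre : (fun p : (V → Ω) × (V' → Ω) => (Sum.elim p.1 p.2 : V ⊕ V' → Ω)) ⁻¹' (s : Set _).pi t
      = (s.toLeft : Set V).pi (t ∘ Sum.inl) ×ˢ (s.toRight : Set V').pi (t ∘ Sum.inr) := by
    ext p
    simp [Set.mem_pi]
  rw [Measure.map_apply hm (.pi s.countable_toSet fun i _ => ht i), hpre, Measure.prod_prod,
    Measure.infinitePi_pi (t := t ∘ Sum.inl) _ fun i _ => ht _,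
    Measure.infinitePi_pi (t := t ∘ Sum.inr) _ fun i _ => ht _,
    Finset.prod_sum_eq_prod_toLeft_mul_prod_toRight]
  rfl

theorem integral_iid_sum {V V' : Type*} {f : (V ⊕ V' → Ω) → ℝ} (hf : Measurable f)
    (h01 : ∀ z, f z ∈ Icc (0 : ℝ) 1) :
    ∫ z, f z ∂iid μ (V ⊕ V') = ∫ x, ∫ y, f (Sum.elim x y) ∂iid μ V' ∂iid μ V := by
  rw [← integral_comp_measurePreserving (measurePreserving_sumElim_iid μ V V') hf]
  exact integral_prod _ (.of_mem_Icc 0 1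
    (hf.comp (measurePreserving_sumElim_iid μ V V').measurable).aemeasurable
    (ae_of_all _ fun _ => h01 _))

theorem measurePreserving_sigmaCurry_iid {J : Type*} [Fintype J] (V : J → Type*) :
    MeasurePreserving (fun (z : (Σ j, V j) → Ω) j (v : V j) => z ⟨j, v⟩)
      (iid μ (Σ j, V j)) (Measure.pi fun j => iid μ (V j)) := by
  rw [← Measure.infinitePi_eq_pi]
  exact ⟨by fun_prop, Measure.infinitePi_map_piCurry fun _ _ => μ⟩

end IndependentSamples

section SimpleGraphs

open scoped Classical in
theorem exists_simpleGraph_prod_eq {n : ℕ} {ι : Type*} [Fintype ι] {s t : ι → Fin n}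
    (hne : ∀ i, s i ≠ t i) (hinj : Function.Injective fun i => s(s i, t i)) :
    ∃ F : SimpleGraph (Fin n), ∀ w : Fin n → Fin n → ℝ, (∀ x y, w x y = w y x) →
      ∏ i, w (s i) (t i) =
        ∏ p ∈ Finset.univ.filter (fun p : Fin n × Fin n => p.1 < p.2 ∧ F.Adj p.1 p.2),
          w p.1 p.2 := by
  obtain ⟨F, hF⟩ : ∃ F : SimpleGraph (Fin n),
      ∀ a b, F.Adj a b ↔ (∃ i, s(s i, t i) = s(a, b)) ∧ a ≠ b :=
    ⟨.fromEdgeSet (range fun i => s(s i, t i)), fun a b => SimpleGraph.fromEdgeSet_adj _⟩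
  refine ⟨F, fun w hw => ?_⟩
  have hmin : ∀ a b : Fin n, s(min a b, max a b) = s(a, b) := fun a b => by
    rcases le_total a b with h | h <;> simp [h, Sym2.eq_swap]
  refine Finset.prod_bij (fun i _ => (min (s i) (t i), max (s i) (t i))) (fun i _ => ?_)
    (fun i _ j _ h => hinj ?_) (fun p hp => ?_) fun i _ => ?_
  · refine Finset.mem_filter.2 ⟨Finset.mem_univ _, min_lt_max.2 (hne i), (hF _ _).2 ?_⟩
    exact ⟨⟨i, (hmin _ _).symm⟩, (min_lt_max.2 (hne i)).ne⟩
  · obtain ⟨h₁, h₂⟩ := Prod.mk.inj h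
    simpa only [hmin] using congrArg₂ (s(·, ·)) h₁ h₂
  · obtain ⟨hlt, hadj⟩ := (Finset.mem_filter.1 hp).2
    obtain ⟨⟨i, hi⟩, -⟩ := (hF _ _).1 hadj
    refine ⟨i, Finset.mem_univ i, ?_⟩
    rcases Sym2.eq_iff.1 hi with ⟨h₁, h₂⟩ | ⟨h₁, h₂⟩ <;> simp [h₁, h₂, hlt.le]
  · rcases le_total (s i) (t i) with h | h <;> simp [h, hw (s i)]

/-- Two kernels with the same homomorphism densities of all finite simple graphs. -/
def HomEquivalent {Ω Ω' : Type*} [MeasurableSpace Ω] [MeasurableSpace Ω'] (μ : Measure Ω)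
    (μ' : Measure Ω') (W : Ω → Ω → ℝ) (W' : Ω' → Ω' → ℝ) : Prop :=
  ∀ (n : ℕ) (F : SimpleGraph (Fin n)), homDensityOn μ F W = homDensityOn μ' F W'

variable {Ω Ω' : Type*} [MeasurableSpace Ω] [MeasurableSpace Ω'] {μ : Measure Ω}
  {μ' : Measure Ω'} [IsProbabilityMeasure μ] [IsProbabilityMeasure μ'] {W : Ω → Ω → ℝ}
  {W' : Ω' → Ω' → ℝ}

theorem HomEquivalent.integral_prod_fin_eq (h : HomEquivalent μ μ' W W') (hW : IsGraphonOn W)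
    (hW' : IsGraphonOn W') {n : ℕ} {ι : Type*} [Fintype ι] {s t : ι → Fin n}
    (hne : ∀ i, s i ≠ t i) (hinj : Function.Injective fun i => s(s i, t i)) :
    ∫ z, ∏ i, W (z (s i)) (z (t i)) ∂iid μ (Fin n) =
      ∫ z, ∏ i, W' (z (s i)) (z (t i)) ∂iid μ' (Fin n) := by
  obtain ⟨F, hF⟩ := exists_simpleGraph_prod_eq hne hinj
  have hprod (z : Fin n → Ω) := hF (fun i j => W (z i) (z j)) fun _ _ => hW.symm _ _
  have hprod' (z : Fin n → Ω') := hF (fun i j => W' (z i) (z j)) fun _ _ => hW'.symm _ _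
  simp only [hprod, hprod', Measure.infinitePi_eq_pi]
  exact h n F

/-- Finitely many distinct edges between arbitrarily indexed vertices form a simple graph on
`Fin n`, after discarding the vertices not on any edge. -/
theorem HomEquivalent.integral_prod_eq (h : HomEquivalent μ μ' W W') (hW : IsGraphonOn W)
    (hW' : IsGraphonOn W') {V ι : Type*} [Fintype ι] {s t : ι → V}
    (hne : ∀ i, s i ≠ t i) (hinj : Function.Injective fun i => s(s i, t i)) :
    ∫ z, ∏ i, W (z (s i)) (z (t i)) ∂iid μ V = ∫ z, ∏ i, W' (z (s i)) (z (t i)) ∂iid μ' V := by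
  obtain ⟨n, c, hc, s, t, rfl, rfl⟩ : ∃ (n : ℕ) (c : Fin n → V), Function.Injective c ∧
      ∃ s' t' : ι → Fin n, s = c ∘ s' ∧ t = c ∘ t' := by
    have hfin : (range s ∪ range t).Finite := (finite_range s).union (finite_range t)
    obtain ⟨n, c, hc, hrange⟩ := Finite.fin_param hfin
    choose s' hs' using fun i => hrange.ge (.inl (mem_range_self i))
    choose t' ht' using fun i => hrange.ge (.inr (mem_range_self i))
    exact ⟨n, c, hc, s', t', funext fun i => (hs' i).symm, funext fun i => (ht' i).symm⟩
  have hrel := h.integral_prod_fin_eq hW hW' (s := s) (t := t)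
    (fun i hi => hne i (congrArg c hi)) (fun i j hij => hinj (congrArg (Sym2.map c) hij))
  rwa [← integral_comp_measurePreserving (measurePreserving_comp_iid μ hc)
      (hW.measurable_prod _ (fun _ => measurable_pi_apply _) fun _ => measurable_pi_apply _),
    ← integral_comp_measurePreserving (measurePreserving_comp_iid μ' hc)
      (hW'.measurable_prod _ (fun _ => measurable_pi_apply _) fun _ => measurable_pi_apply _)]
    at hrel

end SimpleGraphs

section RootedGraphs

/-- A finite set of edges on the disjoint union of the roots `ρ` and of the internal nodes `Node`.
Every edge has an internal endpoint, so that gluing rooted graphs along their roots never creates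
multiple edges. -/
structure RootedGraph (ρ : Type*) where
  Node : Type
  Edge : Type
  [fintypeEdge : Fintype Edge]
  src : Edge → Node
  tgt : Edge → ρ ⊕ Node
  loopless : ∀ e, Sum.inr (src e) ≠ tgt e
  simple : Function.Injective fun e => s(Sum.inr (src e), tgt e)

namespace RootedGraph

attribute [instance] RootedGraph.fintypeEdge

variable {ρ : Type*} {Ω Ω' : Type*} [MeasurableSpace Ω] [MeasurableSpace Ω']

/-- The product of `W` over the edges, when the roots are mapped to the points `a` and the internal
nodes to the points `x`. -/
def edgeProd (R : RootedGraph ρ) (W : Ω → Ω → ℝ) (a : ρ → Ω) (x : R.Node → Ω) : ℝ :=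
  ∏ e, W (x (R.src e)) (Sum.elim a x (R.tgt e))

/-- The density of a rooted graph in `W` when its roots are mapped to the points `a`. -/
noncomputable def density (R : RootedGraph ρ) (μ : Measure Ω) [IsProbabilityMeasure μ]
    (W : Ω → Ω → ℝ) (a : ρ → Ω) : ℝ :=
  ∫ x, R.edgeProd W a x ∂iid μ R.Node

variable {μ : Measure Ω} {μ' : Measure Ω'} [IsProbabilityMeasure μ] [IsProbabilityMeasure μ']
  {W : Ω → Ω → ℝ} {W' : Ω' → Ω' → ℝ}

theorem measurable_edgeProd (R : RootedGraph ρ) (hW : IsGraphonOn W) :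
    Measurable fun p : (ρ → Ω) × (R.Node → Ω) => R.edgeProd W p.1 p.2 := by
  refine hW.measurable_prod _ (fun e => by fun_prop) fun e => ?_
  cases R.tgt e <;> simp only [Sum.elim_inl, Sum.elim_inr] <;> fun_prop

theorem edgeProd_mem_Icc (R : RootedGraph ρ) (hW : IsGraphonOn W) (a : ρ → Ω) (x : R.Node → Ω) :
    R.edgeProd W a x ∈ Icc (0 : ℝ) 1 :=
  hW.prod_mem_Icc _ _ _

theorem measurable_density (R : RootedGraph ρ) (hW : IsGraphonOn W) :
    Measurable (R.density μ W) :=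
  (R.measurable_edgeProd hW).stronglyMeasurable.integral_prod_right.measurable

theorem density_mem_Icc (R : RootedGraph ρ) (hW : IsGraphonOn W) (a : ρ → Ω) :
    R.density μ W a ∈ Icc (0 : ℝ) 1 :=
  integral_mem_Icc ((R.measurable_edgeProd hW).comp measurable_prodMk_left)
    (R.edgeProd_mem_Icc hW a)

theorem integral_density (R : RootedGraph ρ) (hW : IsGraphonOn W) :
    ∫ a, R.density μ W a ∂iid μ ρ =
      ∫ z, ∏ e, W (z (Sum.inr (R.src e))) (z (R.tgt e)) ∂iid μ (ρ ⊕ R.Node) := by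
  rw [integral_iid_sum μ (hW.measurable_prod _ (fun _ => measurable_pi_apply _)
    fun _ => measurable_pi_apply _) fun _ => hW.prod_mem_Icc _ _ _]
  rfl

theorem integral_density_eq_of_homEquivalent (R : RootedGraph ρ) (h : HomEquivalent μ μ' W W')
    (hW : IsGraphonOn W) (hW' : IsGraphonOn W') :
    ∫ a, R.density μ W a ∂iid μ ρ = ∫ a, R.density μ' W' a ∂iid μ' ρ := by
  rw [R.integral_density hW, R.integral_density hW', h.integral_prod_eq hW hW' R.loopless R.simple]

theorem sumMap_sigmaMk_injective {J : Type*} {V : J → Type*} (j : J) :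
    Function.Injective (Sum.map id (Sigma.mk j) : ρ ⊕ V j → ρ ⊕ Σ j, V j) :=
  Sum.map_injective.2 ⟨Function.injective_id, sigma_mk_injective⟩

/-- The disjoint union of rooted graphs with their roots identified. -/
def glue {J : Type} [Fintype J] (R : J → RootedGraph ρ) : RootedGraph ρ where
  Node := Σ j, (R j).Node
  Edge := Σ j, (R j).Edge
  src e := ⟨e.1, (R e.1).src e.2⟩
  tgt e := Sum.map id (Sigma.mk e.1) ((R e.1).tgt e.2)
  loopless := by
    rintro ⟨j, e⟩ h
    refine (R j).loopless e (sumMap_sigmaMk_injective (V := fun j => (R j).Node) j ?_)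
    exact h
  simple := by
    rintro ⟨j, e⟩ ⟨j', e'⟩ h
    obtain rfl : j = j' := by
      rcases Sym2.eq_iff.1 h with ⟨h, -⟩ | ⟨h, -⟩
      · exact congrArg Sigma.fst (Sum.inr.inj h)
      · rcases htgt : (R j').tgt e' with r | x <;> simp_all
    have hinj := sumMap_sigmaMk_injective (ρ := ρ) (V := fun j => (R j).Node) j
    refine congrArg (Sigma.mk j) ((R j).simple (Sym2.map.injective hinj ?_))
    exact h

theorem edgeProd_glue {J : Type} [Fintype J] {α : Type*} (R : J → RootedGraph ρ) (W : α → α → ℝ)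
    (a : ρ → α) (z : (glue R).Node → α) :
    (glue R).edgeProd W a z = ∏ j, (R j).edgeProd W a fun x => z ⟨j, x⟩ := by
  refine (Fintype.prod_sigma _).trans
    (Finset.prod_congr rfl fun j _ => Finset.prod_congr rfl fun e _ => ?_)
  simp only [glue]
  cases (R j).tgt e <;> rfl

theorem density_glue {J : Type} [Fintype J] (R : J → RootedGraph ρ) (hW : IsGraphonOn W)
    (a : ρ → Ω) : (glue R).density μ W a = ∏ j, (R j).density μ W a := by
  have hmeas (j : J) := ((R j).measurable_edgeProd hW).comp (measurable_prodMk_left (x := a))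
  simp only [density, edgeProd_glue]
  rw [← integral_fintype_prod_eq_prod]
  exact integral_comp_measurePreserving (measurePreserving_sigmaCurry_iid μ fun j => (R j).Node)
    (Finset.measurable_fun_prod _ fun j _ => (hmeas j).comp (measurable_pi_apply j))

end RootedGraph

end RootedGraphs

section Moments

theorem integral_eq_of_mem_adjoin {E κ : Type*} [TopologicalSpace E] [MeasurableSpace E]
    [OpensMeasurableSpace E] {P P' : Measure E} [IsFiniteMeasure P] [IsFiniteMeasure P']
    {c : κ → BoundedContinuousFunction E ℝ}
    (h : ∀ (n : ℕ) (w : Fin n → κ), ∫ x, ∏ l, c (w l) x ∂P = ∫ x, ∏ l, c (w l) x ∂P')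
    {g : BoundedContinuousFunction E ℝ} (hg : g ∈ StarAlgebra.adjoin ℝ (range c)) :
    ∫ x, g x ∂P = ∫ x, g x ∂P' := by
  have hstar : star (range c) = range c := by
    ext f
    rw [Set.mem_star, show star f = f from BoundedContinuousFunction.ext fun x => star_trivial _]
  rw [← SetLike.mem_coe, ← StarSubalgebra.coe_toSubalgebra, ← Subalgebra.coe_toSubmodule,
    StarAlgebra.adjoin_eq_span, hstar, union_self] at hg
  induction hg using Submodule.span_induction with
  | mem f hf =>
    obtain ⟨l, hl, rfl⟩ := Submonoid.exists_list_of_mem_closure hf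
    obtain ⟨w, rfl⟩ : l ∈ range (List.map c) := by rwa [range_list_map]
    simpa [← Fin.prod_univ_fun_getElem] using h w.length (fun i => w[i])
  | zero => simp
  | add f g _ _ hf hg =>
    simp only [BoundedContinuousFunction.coe_add, Pi.add_apply]
    rw [integral_add (f.integrable P) (g.integrable P),
      integral_add (f.integrable P') (g.integrable P'), hf, hg]
  | smul r f _ hf =>
    simp only [BoundedContinuousFunction.coe_smul, integral_smul, hf]

theorem measure_ext_of_integral_prod_eq {E κ : Type*} [TopologicalSpace E] [PolishSpace E]
    [MeasurableSpace E] [BorelSpace E] {P P' : Measure E} [IsFiniteMeasure P] [IsFiniteMeasure P']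
    {c : κ → BoundedContinuousFunction E ℝ} (hsep : ∀ x y, (∀ k, c k x = c k y) → x = y)
    (h : ∀ (n : ℕ) (w : Fin n → κ), ∫ x, ∏ l, c (w l) x ∂P = ∫ x, ∏ l, c (w l) x ∂P') :
    P = P' := by
  refine ext_of_forall_mem_subalgebra_integral_eq_of_polish (𝕜 := ℝ)
    (A := StarAlgebra.adjoin ℝ (range c)) (fun x y hxy => ?_)
    fun _ => integral_eq_of_mem_adjoin h
  obtain ⟨k, hk⟩ := not_forall.1 (mt (hsep x y) hxy)
  exact ⟨c k, ⟨c k, ⟨c k, StarAlgebra.subset_adjoin ℝ _ (mem_range_self k), rfl⟩, rfl⟩, hk⟩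

/-- The coordinates of the compact space `κ → [0,1]`, as bounded continuous functions. -/
def coordBCF (κ : Type*) (k : κ) : BoundedContinuousFunction (κ → unitInterval) ℝ :=
  .mkOfCompact ⟨fun z => z k, by fun_prop⟩

theorem measure_ext_of_integral_prod_coord_eq {κ : Type*} [Countable κ]
    {P P' : Measure (κ → unitInterval)} [IsFiniteMeasure P] [IsFiniteMeasure P']
    (h : ∀ (n : ℕ) (w : Fin n → κ),
      ∫ z, ∏ l, (z (w l) : ℝ) ∂P = ∫ z, ∏ l, (z (w l) : ℝ) ∂P') : P = P' :=
  measure_ext_of_integral_prod_eq (c := coordBCF κ)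
    (fun _ _ hxy => funext fun k => Subtype.ext (hxy k)) h

end Moments

section DensityLaws

variable {ρ κ : Type*} {Ω Ω' : Type*} [MeasurableSpace Ω] [MeasurableSpace Ω']
  {μ : Measure Ω} {μ' : Measure Ω'} [IsProbabilityMeasure μ] [IsProbabilityMeasure μ']
  {W : Ω → Ω → ℝ} {W' : Ω' → Ω' → ℝ}

/-- The densities of a family of rooted graphs, as a function of the roots. -/
noncomputable def densities (μ : Measure Ω) [IsProbabilityMeasure μ] (hW : IsGraphonOn W)
    (R : κ → RootedGraph ρ) (a : ρ → Ω) (k : κ) : unitInterval :=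
  ⟨(R k).density μ W a, (R k).density_mem_Icc hW a⟩

theorem measurable_densities (hW : IsGraphonOn W) (R : κ → RootedGraph ρ) :
    Measurable (densities μ hW R) :=
  measurable_pi_iff.2 fun k => ((R k).measurable_density hW).subtype_mk

theorem integral_prod_map_densities (hW : IsGraphonOn W) (R : κ → RootedGraph ρ) {n : ℕ}
    (w : Fin n → κ) :
    ∫ z, ∏ l, (z (w l) : ℝ) ∂(iid μ ρ).map (densities μ hW R) =
      ∫ a, (RootedGraph.glue (R ∘ w)).density μ W a ∂iid μ ρ := by
  rw [integral_map (measurable_densities hW R).aemeasurable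
    (Measurable.aestronglyMeasurable (by fun_prop))]
  simp only [RootedGraph.density_glue (R ∘ w) hW, densities, Function.comp]

/-- The joint moments of the densities are the homomorphism densities of the glued graphs. -/
theorem HomEquivalent.map_densities_eq [Countable κ] (h : HomEquivalent μ μ' W W')
    (hW : IsGraphonOn W) (hW' : IsGraphonOn W') (R : κ → RootedGraph ρ) :
    (iid μ ρ).map (densities μ hW R) = (iid μ' ρ).map (densities μ' hW' R) := by
  have := Measure.isProbabilityMeasure_map (μ := iid μ ρ)
    (measurable_densities (μ := μ) hW R).aemeasurable
  have := Measure.isProbabilityMeasure_map (μ := iid μ' ρ)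
    (measurable_densities (μ := μ') hW' R).aemeasurable
  refine measure_ext_of_integral_prod_coord_eq fun n w => ?_
  rw [integral_prod_map_densities hW, integral_prod_map_densities hW',
    (RootedGraph.glue (R ∘ w)).integral_density_eq_of_homEquivalent h hW hW']

end DensityLaws

section Matching

/-- Were there no such pair, the analytic images of the two full-measure sets would be disjoint and
hence separated by a measurable set. -/
theorem exists_eq_of_map_eq {α α' β : Type*} [MeasurableSpace α] [StandardBorelSpace α]
    [MeasurableSpace α'] [StandardBorelSpace α'] [TopologicalSpace β] [T2Space β]
    [SecondCountableTopology β] [MeasurableSpace β] [OpensMeasurableSpace β] {P : Measure α}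
    {P' : Measure α'} [NeZero P] {D : α → β} {D' : α' → β} (hD : Measurable D)
    (hD' : Measurable D') (hmap : P.map D = P'.map D') {p : α → Prop} {p' : α' → Prop}
    (hp : ∀ᵐ a ∂P, p a) (hp' : ∀ᵐ a ∂P', p' a) : ∃ a a', p a ∧ p' a' ∧ D a = D' a' := by
  obtain ⟨s, hs, hsm, hs_null⟩ := exists_measurable_superset_of_null hp
  obtain ⟨s', hs', hsm', hs_null'⟩ := exists_measurable_superset_of_null hp'
  by_contra! hne
  have hdisj : Disjoint (D '' sᶜ) (D' '' s'ᶜ) := by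
    rw [Set.disjoint_left]
    rintro _ ⟨a, ha, rfl⟩ ⟨a', ha', h⟩
    exact hne a a' (not_not.1 fun h => ha (hs h)) (not_not.1 fun h => ha' (hs' h)) h.symm
  obtain ⟨u, hsu, hdu, hu⟩ := (hsm.compl.analyticSet_image hD).measurablySeparable
    (hsm'.compl.analyticSet_image hD') hdisj
  have hfull : P.map D uᶜ = 0 := by
    rw [Measure.map_apply hD hu.compl]
    exact measure_mono_null (fun a ha => not_not.1 fun h => ha (hsu ⟨a, h, rfl⟩)) hs_null
  have hnull : P.map D u = 0 := by
    rw [hmap, Measure.map_apply hD' hu]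
    exact measure_mono_null
      (fun a ha => not_not.1 fun h => Set.disjoint_left.1 hdu ⟨a, h, rfl⟩ ha) hs_null'
  have huniv : P univ = 0 := by
    rw [← preimage_univ (f := D), ← Measure.map_apply hD .univ, ← union_compl_self u]
    exact measure_union_null hnull hfull
  exact NeZero.ne P (Measure.measure_univ_eq_zero.1 huniv)

end Matching

section Codegree

variable {Ω : Type*} [MeasurableSpace Ω]

/-- The density of paths with two edges between two points. -/
noncomputable def codegree (μ : Measure Ω) (W : Ω → Ω → ℝ) (x y : Ω) : ℝ :=
  ∫ z, W z x * W z y ∂μ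

variable {μ : Measure Ω} [IsProbabilityMeasure μ] {W : Ω → Ω → ℝ}

theorem IsGraphonOn.measurable_codegree_integrand (hW : IsGraphonOn W) :
    Measurable fun p : (Ω × Ω) × Ω => W p.2 p.1.1 * W p.2 p.1.2 :=
  (hW.measurable_comp (by fun_prop) (by fun_prop)).mul
    (hW.measurable_comp (by fun_prop) (by fun_prop))

theorem IsGraphonOn.isGraphonOn_codegree (hW : IsGraphonOn W) : IsGraphonOn (codegree μ W) where
  measurable := hW.measurable_codegree_integrand.stronglyMeasurable.integral_prod_right.measurable
  symm _ _ := integral_congr_ae (ae_of_all _ fun _ => mul_comm _ _)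
  mem_Icc x y := integral_mem_Icc
    (hW.measurable_codegree_integrand.comp (measurable_prodMk_left (x := (x, y))))
    fun z => unitInterval.mul_mem (hW.mem_Icc z x) (hW.mem_Icc z y)

/-- The codegrees of a point with a family of anchors. -/
noncomputable def anchorMap {ρ : Type*} (μ : Measure Ω) [IsProbabilityMeasure μ]
    (hW : IsGraphonOn W) (a : ρ → Ω) (x : Ω) (i : ρ) : unitInterval :=
  ⟨codegree μ W (a i) x, hW.isGraphonOn_codegree.mem_Icc _ _⟩

theorem measurable_anchorMap {ρ : Type*} (hW : IsGraphonOn W) (a : ρ → Ω) :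
    Measurable (anchorMap μ hW a) :=
  measurable_pi_iff.2 fun i =>
    (hW.isGraphonOn_codegree.measurable_comp (measurable_const (a := a i)) measurable_id).subtype_mk

end Codegree

section MomentGraphs

/-- Two nodes, joined by `k` edges, together with one path of length two for each `l`, joining the
node `(w l).1` to the root `(w l).2`. -/
def RootedGraph.moment {ρ : Type*} (k : Fin 2) {n : ℕ} (w : Fin n → Fin 2 × ρ) :
    RootedGraph ρ where
  Node := Fin 2 ⊕ Fin n
  Edge := Fin k ⊕ (Fin n ⊕ Fin n)
  src := Sum.elim (fun _ => .inl 0) (Sum.elim .inr .inr)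
  tgt := Sum.elim (fun _ => .inr (.inl 1))
    (Sum.elim (fun l => .inl (w l).2) fun l => .inr (.inl (w l).1))
  loopless := by
    rintro (_ | _ | _) <;> simp
  simple := by
    have : Subsingleton (Fin k) := Fin.subsingleton_iff_le_one.2 (Nat.le_of_lt_succ k.2)
    rintro (i | l | l) (j | m | m) h
    · rw [Subsingleton.elim i j]
    all_goals simp_all

variable {ρ Ω : Type*}

theorem RootedGraph.edgeProd_moment (k : Fin 2) {n : ℕ} (w : Fin n → Fin 2 × ρ) (W : Ω → Ω → ℝ)
    (a : ρ → Ω) (x : Fin 2 → Ω) (z : Fin n → Ω) :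
    (moment k w).edgeProd W a (Sum.elim x z : Fin 2 ⊕ Fin n → Ω) =
      W (x 0) (x 1) ^ (k : ℕ) * ∏ l, W (z l) (a (w l).2) * W (z l) (x (w l).1) := by
  rw [Finset.prod_mul_distrib]
  refine (Fintype.prod_sum_type _).trans ?_
  congr 1
  · simp [moment]
  · exact Fintype.prod_sum_type _

theorem RootedGraph.density_moment [MeasurableSpace Ω] {μ : Measure Ω} [IsProbabilityMeasure μ]
    {W : Ω → Ω → ℝ} (hW : IsGraphonOn W) (k : Fin 2) {n : ℕ} (w : Fin n → Fin 2 × ρ) (a : ρ → Ω) :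
    (moment k w).density μ W a = ∫ p, W p.1 p.2 ^ (k : ℕ) *
      ∏ l, codegree μ W (a (w l).2) (![p.1, p.2] (w l).1) ∂μ.prod μ := by
  have hmeas := ((moment k w).measurable_edgeProd hW).comp (measurable_prodMk_left (x := a))
  have hpair : Measurable fun p : Ω × Ω => W p.1 p.2 ^ (k : ℕ) *
      ∏ l, codegree μ W (a (w l).2) (![p.1, p.2] (w l).1) := by
    refine ((hW.measurable_comp measurable_fst measurable_snd).pow_const _).mul
      (hW.isGraphonOn_codegree.measurable_prod _ (fun _ => measurable_const) fun l => ?_)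
    generalize (w l).1 = i
    fin_cases i
    exacts [measurable_fst, measurable_snd]
  have hcoord (x : Fin 2 → Ω) : ![x 0, x 1] = x := by
    ext i
    fin_cases i <;> rfl
  calc (moment k w).density μ W a
      = ∫ x, ∫ z, W (x 0) (x 1) ^ (k : ℕ) * ∏ l, W (z l) (a (w l).2) * W (z l) (x (w l).1)
          ∂iid μ (Fin n) ∂iid μ (Fin 2) := by
        simp only [← edgeProd_moment]
        exact integral_iid_sum μ hmeas fun _ => (moment k w).edgeProd_mem_Icc hW _ _
    _ = ∫ x, W (x 0) (x 1) ^ (k : ℕ) * ∏ l, codegree μ W (a (w l).2) (x (w l).1)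
          ∂Measure.pi fun _ : Fin 2 => μ := by
        simp only [iid, Measure.infinitePi_eq_pi, integral_const_mul, codegree,
          ← integral_fintype_prod_eq_prod]
    _ = _ := by
        rw [← integral_comp_measurePreserving (measurePreserving_pair_pi μ
          (i := (0 : Fin 2)) (j := 1) Fin.zero_ne_one) hpair]
        simp only [hcoord]

end MomentGraphs

section PairLaws

variable {Ω : Type*} [MeasurableSpace Ω] {Z : Type*} [MeasurableSpace Z]

/-- The law of `(f x, f y)` for independent samples `x`, `y` of `μ`, weighted by `W(x,y)^k`. -/
noncomputable def pairLaw (μ : Measure Ω) (W : Ω → Ω → ℝ) (f : Ω → Z) (k : ℕ) : Measure (Z × Z) :=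
  ((μ.prod μ).withDensity fun p => ENNReal.ofReal (W p.1 p.2 ^ k)).map (Prod.map f f)

variable {μ : Measure Ω} {W : Ω → Ω → ℝ} {f : Ω → Z}

theorem IsGraphonOn.measurable_pow (hW : IsGraphonOn W) (k : ℕ) :
    Measurable fun p : Ω × Ω => W p.1 p.2 ^ k :=
  hW.measurable.pow_const k

theorem IsGraphonOn.isFiniteMeasure_pairLaw [IsProbabilityMeasure μ] (hW : IsGraphonOn W) (k : ℕ) :
    IsFiniteMeasure (pairLaw μ W f k) := by
  have hint : Integrable (fun p : Ω × Ω => W p.1 p.2 ^ k) (μ.prod μ) :=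
    .of_mem_Icc 0 1 (hW.measurable_pow k).aemeasurable (ae_of_all _ fun p =>
      ⟨pow_nonneg (hW.mem_Icc _ _).1 k, pow_le_one₀ (hW.mem_Icc _ _).1 (hW.mem_Icc _ _).2⟩)
  have := isFiniteMeasure_withDensity_ofReal hint.2
  exact Measure.isFiniteMeasure_map _ _

theorem integral_pairLaw (hW : IsGraphonOn W) (hf : Measurable f) (k : ℕ) {g : Z × Z → ℝ}
    (hg : Measurable g) :
    ∫ z, g z ∂pairLaw μ W f k = ∫ p, W p.1 p.2 ^ k * g (f p.1, f p.2) ∂μ.prod μ := by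
  rw [pairLaw, integral_map (hf.prodMap hf).aemeasurable hg.aestronglyMeasurable,
    integral_withDensity_eq_integral_toReal_smul (hW.measurable_pow k).ennreal_ofReal
      (ae_of_all _ fun _ => ENNReal.ofReal_lt_top)]
  simp only [smul_eq_mul, ENNReal.toReal_ofReal (pow_nonneg (hW.mem_Icc _ _).1 k), Prod.map]

variable [IsProbabilityMeasure μ]

theorem pairLaw_zero (hf : Measurable f) :
    pairLaw μ W f 0 = (μ.map f).prod (μ.map f) := by
  simp only [pairLaw, pow_zero, ENNReal.ofReal_one, withDensity_const, one_smul]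
  exact (Measure.map_prod_map μ μ hf hf).symm

/-- The coordinates of the compact space `(ρ → [0,1]) × (ρ → [0,1])`, as bounded continuous
functions. -/
def pairCoordBCF (ρ : Type*) (i : Fin 2 × ρ) :
    BoundedContinuousFunction ((ρ → unitInterval) × (ρ → unitInterval)) ℝ :=
  .mkOfCompact ⟨fun z => ![z.1, z.2] i.1 i.2, by
    obtain ⟨i, r⟩ := i
    fin_cases i
    exacts [continuous_subtype_val.comp ((continuous_apply r).comp continuous_fst),
      continuous_subtype_val.comp ((continuous_apply r).comp continuous_snd)]⟩

theorem measure_ext_of_integral_prod_pairCoord_eq {ρ : Type*} [Countable ρ]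
    {P P' : Measure ((ρ → unitInterval) × (ρ → unitInterval))} [IsFiniteMeasure P]
    [IsFiniteMeasure P'] (h : ∀ (n : ℕ) (w : Fin n → Fin 2 × ρ),
      ∫ z, ∏ l, (![z.1, z.2] (w l).1 (w l).2 : ℝ) ∂P =
        ∫ z, ∏ l, (![z.1, z.2] (w l).1 (w l).2 : ℝ) ∂P') : P = P' := by
  refine measure_ext_of_integral_prod_eq (c := pairCoordBCF ρ) (fun x y hxy => ?_) h
  exact Prod.ext (funext fun r => Subtype.ext (hxy (0, r)))
    (funext fun r => Subtype.ext (hxy (1, r)))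

theorem density_moment_eq_integral_pairLaw {ρ : Type*} [Countable ρ] (hW : IsGraphonOn W)
    (k : Fin 2) {n : ℕ} (w : Fin n → Fin 2 × ρ) (a : ρ → Ω) :
    (RootedGraph.moment k w).density μ W a =
      ∫ z, ∏ l, (![z.1, z.2] (w l).1 (w l).2 : ℝ) ∂pairLaw μ W (anchorMap μ hW a) k := by
  have hmeas : Measurable fun z : (ρ → unitInterval) × (ρ → unitInterval) =>
      ∏ l, (![z.1, z.2] (w l).1 (w l).2 : ℝ) :=
    Finset.measurable_fun_prod _ fun l _ => (pairCoordBCF ρ (w l)).continuous.measurable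
  have hcoord (i : Fin 2) (r : ρ) (p : Ω × Ω) :
      codegree μ W (a r) (![p.1, p.2] i) =
        ![anchorMap μ hW a p.1, anchorMap μ hW a p.2] i r := by
    fin_cases i <;> rfl
  simp only [integral_pairLaw hW (measurable_anchorMap hW a) _ hmeas,
    RootedGraph.density_moment hW, hcoord]

theorem pairLaw_anchorMap_eq {Ω' : Type*} [MeasurableSpace Ω']
    {μ' : Measure Ω'} [IsProbabilityMeasure μ'] {W' : Ω' → Ω' → ℝ} {ρ : Type*} [Countable ρ]
    (hW : IsGraphonOn W) (hW' : IsGraphonOn W') {a : ρ → Ω} {a' : ρ → Ω'} {k : Fin 2}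
    (h : ∀ (n : ℕ) (w : Fin n → Fin 2 × ρ), (RootedGraph.moment k w).density μ W a =
      (RootedGraph.moment k w).density μ' W' a') :
    pairLaw μ W (anchorMap μ hW a) k = pairLaw μ' W' (anchorMap μ' hW' a') k := by
  have := hW.isFiniteMeasure_pairLaw (μ := μ) (f := anchorMap μ hW a) k
  have := hW'.isFiniteMeasure_pairLaw (μ := μ') (f := anchorMap μ' hW' a') k
  refine measure_ext_of_integral_prod_pairCoord_eq fun n w => ?_
  rw [← density_moment_eq_integral_pairLaw hW, ← density_moment_eq_integral_pairLaw hW', h]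

end PairLaws

section Anchors

variable {Ω Ω' : Type*} [MeasurableSpace Ω] [StandardBorelSpace Ω] [MeasurableSpace Ω']
  [StandardBorelSpace Ω'] {μ : Measure Ω} {μ' : Measure Ω'} [IsProbabilityMeasure μ]
  [IsProbabilityMeasure μ'] {W : Ω → Ω → ℝ} {W' : Ω' → Ω' → ℝ}

theorem HomEquivalent.exists_anchors {ρ : Type*} [Countable ρ] (h : HomEquivalent μ μ' W W')
    (hW : IsGraphonOn W) (hW' : IsGraphonOn W') {p : (ρ → Ω) → Prop} {p' : (ρ → Ω') → Prop}
    (hp : ∀ᵐ a ∂iid μ ρ, p a) (hp' : ∀ᵐ a ∂iid μ' ρ, p' a) :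
    ∃ a a', p a ∧ p' a' ∧ ∀ k : Fin 2,
      pairLaw μ W (anchorMap μ hW a) k = pairLaw μ' W' (anchorMap μ' hW' a') k := by
  let R (i : Fin 2 × Σ n, Fin n → Fin 2 × ρ) : RootedGraph ρ := .moment i.1 i.2.2
  obtain ⟨a, a', ha, ha', heq⟩ := exists_eq_of_map_eq (measurable_densities hW R)
    (measurable_densities hW' R) (h.map_densities_eq hW hW' R) hp hp'
  exact ⟨a, a', ha, ha', fun k => pairLaw_anchorMap_eq hW hW' fun n w =>
    congrArg Subtype.val (congrFun heq (k, ⟨n, w⟩))⟩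

end Anchors

section Detection

variable {Ω : Type*} [MeasurableSpace Ω] {μ : Measure Ω} {K : Ω → Ω → ℝ}

theorem abs_le_one_of_mem_Icc {r : ℝ} (h : r ∈ Icc (0 : ℝ) 1) : |r| ≤ 1 :=
  abs_le.2 ⟨neg_one_lt_zero.le.trans h.1, h.2⟩

theorem abs_mul_le_one {r s : ℝ} (hr : |r| ≤ 1) (hs : |s| ≤ 1) : |r * s| ≤ 1 :=
  (abs_mul r s).trans_le (mul_le_one₀ hr (abs_nonneg _) hs)

theorem IsGraphonOn.abs_le_one (hK : IsGraphonOn K) (x y : Ω) : |K x y| ≤ 1 :=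
  abs_le_one_of_mem_Icc (hK.mem_Icc x y)

theorem IsGraphonOn.integrable_mul (hK : IsGraphonOn K) {h : Ω → ℝ} (hh : Integrable h μ) (y : Ω) :
    Integrable (fun x => h x * K y x) μ :=
  hh.mul_bdd (c := 1) (hK.measurable_comp measurable_const measurable_id).aestronglyMeasurable
    (ae_of_all _ fun x => hK.abs_le_one y x)

theorem IsGraphonOn.measurable_integral_mul [SFinite μ] (hK : IsGraphonOn K) {h : Ω → ℝ}
    (hh : StronglyMeasurable h) : Measurable fun y => ∫ x, h x * K y x ∂μ :=
  ((hh.measurable.comp measurable_snd).mul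
    hK.measurable).stronglyMeasurable.integral_prod_right.measurable

theorem IsGraphonOn.abs_integral_mul_sub_le (hK : IsGraphonOn K) {h φ : Ω → ℝ}
    (hh : Integrable h μ) (hφ : Integrable φ μ) (y : Ω) :
    |∫ x, h x * K y x ∂μ - ∫ x, φ x * K y x ∂μ| ≤ ∫ x, |h x - φ x| ∂μ := by
  rw [← integral_sub (hK.integrable_mul hh y) (hK.integrable_mul hφ y)]
  refine (abs_integral_le_integral_abs).trans
    (integral_mono_of_nonneg (ae_of_all _ fun _ => abs_nonneg _) (hh.sub hφ).abs
      (ae_of_all _ fun x => ?_))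
  simp only
  rw [← sub_mul, abs_mul]
  exact mul_le_of_le_one_right (abs_nonneg _) (hK.abs_le_one y x)

theorem exists_seq_integrable_dense [MeasurableSpace.CountablyGenerated Ω] (μ : Measure Ω)
    [SFinite μ] : ∃ φ : ℕ → Ω → ℝ, (∀ n, StronglyMeasurable (φ n)) ∧
      (∀ n, Integrable (φ n) μ) ∧
      ∀ h : Ω → ℝ, Integrable h μ → ∀ ε > 0, ∃ n, ∫ x, |h x - φ n x| ∂μ < ε := by
  have : Fact ((1 : ENNReal) ≠ ⊤) := ⟨ENNReal.one_ne_top⟩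
  have : SecondCountableTopology (Lp ℝ 1 μ) := Lp.SecondCountableTopology
  refine ⟨fun n => TopologicalSpace.denseSeq (Lp ℝ 1 μ) n, fun n => Lp.stronglyMeasurable _,
    fun n => L1.integrable_coeFn _, fun h hh ε hε => ?_⟩
  obtain ⟨n, hn⟩ := (TopologicalSpace.denseRange_denseSeq (Lp ℝ 1 μ)).exists_dist_lt
    hh.toL1 hε
  refine ⟨n, lt_of_eq_of_lt ?_ hn⟩
  rw [dist_eq_norm, L1.norm_eq_integral_norm]
  refine integral_congr_ae ?_
  filter_upwards [hh.coeFn_toL1, Lp.coeFn_sub hh.toL1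
    (TopologicalSpace.denseSeq (Lp ℝ 1 μ) n)] with x hx hsub
  rw [hsub, Pi.sub_apply, hx, Real.norm_eq_abs]

variable [IsProbabilityMeasure μ]

theorem ae_iid_exists_mem {S : Set Ω} (hS : MeasurableSet S) (hμ : μ S ≠ 0) :
    ∀ᵐ a ∂iid μ ℕ, ∃ i, a i ∈ S := by
  have hlt : μ Sᶜ < 1 :=
    prob_le_one.lt_of_ne fun h => hμ ((prob_compl_eq_one_iff hS).1 h)
  have hle (n : ℕ) : iid μ ℕ {a | ¬∃ i, a i ∈ S} ≤ μ Sᶜ ^ n :=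
    calc iid μ ℕ {a | ¬∃ i, a i ∈ S} ≤ iid μ ℕ ((Finset.range n : Set ℕ).pi fun _ => Sᶜ) :=
          measure_mono fun a ha i _ hi => ha ⟨i, hi⟩
      _ = μ Sᶜ ^ n := by
          rw [Measure.infinitePi_pi _ fun _ _ => hS.compl, Finset.prod_const, Finset.card_range]
  exact le_zero_iff.1 (ge_of_tendsto' (ENNReal.tendsto_pow_atTop_nhds_zero_of_lt_one hlt) hle)

theorem ae_iid_mem_closure_range {E : Type*} [TopologicalSpace E] [SecondCountableTopology E]
    [MeasurableSpace E] [OpensMeasurableSpace E] {f : Ω → E} (hf : Measurable f) :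
    ∀ᵐ a ∂iid μ ℕ, ∀ᵐ y ∂μ, f y ∈ closure (range (f ∘ a)) := by
  have hcount := TopologicalSpace.countable_countableBasis E
  have hhit : ∀ᵐ a ∂iid μ ℕ, ∀ U ∈ TopologicalSpace.countableBasis E,
      μ (f ⁻¹' U) ≠ 0 → ∃ i, a i ∈ f ⁻¹' U :=
    (ae_ball_iff hcount).2 fun U hU => ae_all_iff.2 fun hμU => ae_iid_exists_mem
      (hf (TopologicalSpace.isOpen_of_mem_countableBasis hU).measurableSet) hμU
  have hnull : ∀ᵐ y ∂μ, ∀ U ∈ TopologicalSpace.countableBasis E, μ (f ⁻¹' U) = 0 → f y ∉ U :=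
    (ae_ball_iff hcount).2 fun U _ => ae_all_iff.2 fun hμU => measure_eq_zero_iff_ae_notMem.1 hμU
  filter_upwards [hhit] with a ha
  filter_upwards [hnull] with y hy
  refine (TopologicalSpace.isBasis_countableBasis E).mem_closure_iff.2 fun U hU hyU => ?_
  obtain ⟨i, hi⟩ := ha U hU fun h => hy U hU h hyU
  exact ⟨f (a i), hi, i, rfl⟩

theorem IsGraphonOn.ae_iid_integral_mul_eq_zero [MeasurableSpace.CountablyGenerated Ω]
    (hK : IsGraphonOn K) : ∀ᵐ a ∂iid μ ℕ, ∀ h : Ω → ℝ, Integrable h μ →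
      (∀ i, ∫ x, h x * K (a i) x ∂μ = 0) → ∀ᵐ y ∂μ, ∫ x, h x * K y x ∂μ = 0 := by
  obtain ⟨φ, hφm, hφi, hφd⟩ := exists_seq_integrable_dense μ
  have hclosure := ae_all_iff.2 fun n =>
    ae_iid_mem_closure_range (μ := μ) (hK.measurable_integral_mul (μ := μ) (hφm n))
  filter_upwards [hclosure] with a ha h hh h0
  filter_upwards [ae_all_iff.2 ha] with y hy
  refine abs_nonpos_iff.1 (le_of_forall_pos_lt_add fun ε hε => ?_)
  obtain ⟨n, hn⟩ := hφd h hh (ε / 2) (half_pos hε)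
  have hanchor (i : ℕ) : |∫ x, φ n x * K (a i) x ∂μ| ≤ ∫ x, |h x - φ n x| ∂μ := by
    simpa only [h0 i, zero_sub, abs_neg] using hK.abs_integral_mul_sub_le hh (hφi n) (a i)
  have hy' : |∫ x, φ n x * K y x ∂μ| ≤ ∫ x, |h x - φ n x| ∂μ :=
    closure_minimal (range_subset_iff.2 hanchor) (isClosed_le continuous_abs continuous_const)
      (hy n)
  have := abs_sub_abs_le_abs_sub (∫ x, h x * K y x ∂μ) (∫ x, φ n x * K y x ∂μ)
  linarith [hK.abs_integral_mul_sub_le hh (hφi n) y]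

end Detection

section CodegreeKernel

variable {Ω : Type*} [MeasurableSpace Ω] {μ : Measure Ω} [IsProbabilityMeasure μ] {W : Ω → Ω → ℝ}
  {u : Ω → ℝ}

/-- If `T` is the integral operator with kernel `W`, then the codegree is the kernel of `T* T`, and
`⟪u, T* T u⟫ = ‖T u‖²`. -/
theorem IsGraphonOn.integral_mul_eq_zero_of_codegree (hW : IsGraphonOn W) (hu : Measurable u)
    (hu1 : ∀ x, |u x| ≤ 1) (h0 : ∀ᵐ y ∂μ, ∫ x, u x * codegree μ W y x ∂μ = 0) :
    ∀ᵐ z ∂μ, ∫ x, u x * W z x ∂μ = 0 := by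
  set T : Ω → ℝ := fun z => ∫ x, u x * W z x ∂μ with hT
  have hTm : Measurable T := hW.measurable_integral_mul hu.stronglyMeasurable
  have hT1 (z : Ω) : |T z| ≤ 1 := by
    simpa using norm_integral_le_of_norm_le_const (μ := μ) (f := fun x => u x * W z x)
      (ae_of_all _ fun x => abs_mul_le_one (hu1 x) (hW.abs_le_one z x))
  have hadjoint (y : Ω) : ∫ z, T z * W z y ∂μ = ∫ x, u x * codegree μ W y x ∂μ := by
    simp only [hT, codegree, ← integral_const_mul, ← integral_mul_const]
    rw [integral_integral_swap]
    · simp only [mul_comm, mul_left_comm]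
    · exact .of_bound (((hu.comp measurable_snd).mul hW.measurable).mul
        (hW.measurable_comp measurable_fst measurable_const)).aestronglyMeasurable 1
        (ae_of_all _ fun p =>
          abs_mul_le_one (abs_mul_le_one (hu1 _) (hW.abs_le_one _ _)) (hW.abs_le_one _ _))
  have hsq : ∫ z, T z * T z ∂μ = 0 :=
    calc ∫ z, T z * T z ∂μ = ∫ z, ∫ y, u y * (T z * W z y) ∂μ ∂μ := by
          simp only [mul_left_comm (u _), integral_const_mul]
          rfl
      _ = ∫ y, u y * ∫ z, T z * W z y ∂μ ∂μ := by
          rw [integral_integral_swap]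
          · simp only [integral_const_mul]
          · exact .of_bound ((hu.comp measurable_snd).mul
              ((hTm.comp measurable_fst).mul hW.measurable)).aestronglyMeasurable 1
              (ae_of_all _ fun p =>
                abs_mul_le_one (hu1 _) (abs_mul_le_one (hT1 _) (hW.abs_le_one _ _)))
      _ = 0 := by
          refine integral_eq_zero_of_ae (h0.mono fun y hy => ?_)
          simp only [hadjoint, hy, mul_zero, Pi.zero_apply]
  have hTT := (integral_eq_zero_iff_of_nonneg (fun z => mul_self_nonneg (T z))
    (.of_bound (hTm.mul hTm).aestronglyMeasurable 1
      (ae_of_all _ fun z => abs_mul_le_one (hT1 z) (hT1 z)))).1 hsq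
  exact hTT.mono fun z hz => mul_self_eq_zero.1 hz

end CodegreeKernel

section Factoring

theorem exists_density_of_le {Z : Type*} [MeasurableSpace Z] {ν ν' : Measure Z}
    [IsFiniteMeasure ν] (hle : ν' ≤ ν) : ∃ s : Z → ℝ, Measurable s ∧ (∀ z, s z ∈ Icc (0 : ℝ) 1) ∧
      ν' = ν.withDensity fun z => ENNReal.ofReal (s z) := by
  have : IsFiniteMeasure ν' := isFiniteMeasure_of_le ν hle
  refine ⟨fun z => (min (ν'.rnDeriv ν z) 1).toReal,
    ((Measure.measurable_rnDeriv ν' ν).min measurable_const).ennreal_toReal,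
    fun z => ⟨ENNReal.toReal_nonneg, ENNReal.toReal_le_of_le_ofReal zero_le_one
      ((min_le_right _ _).trans_eq ENNReal.ofReal_one.symm)⟩, ?_⟩
  nth_rw 1 [← Measure.withDensity_rnDeriv_eq ν' ν (Measure.absolutelyContinuous_of_le hle)]
  refine withDensity_congr_ae ((Measure.rnDeriv_le_one_of_le hle).mono fun z hz => ?_)
  simp only
  rw [ENNReal.ofReal_toReal ((min_le_right _ _).trans_lt ENNReal.one_lt_top).ne]
  exact (min_eq_left hz).symm

theorem integral_withDensity_ofReal {Z : Type*} [MeasurableSpace Z] {ν : Measure Z} {s : Z → ℝ}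
    (hs : Measurable s) (hs0 : ∀ z, 0 ≤ s z) (g : Z → ℝ) :
    ∫ z, g z ∂ν.withDensity (fun z => ENNReal.ofReal (s z)) = ∫ z, s z * g z ∂ν := by
  rw [integral_withDensity_eq_integral_toReal_smul hs.ennreal_ofReal
    (ae_of_all _ fun _ => ENNReal.ofReal_lt_top)]
  simp only [smul_eq_mul, ENNReal.toReal_ofReal (hs0 _)]

theorem ae_eq_of_setIntegral_prod_eq {α β : Type*} [MeasurableSpace α] [MeasurableSpace β]
    {P : Measure (α × β)} [SigmaFinite P] {F G : α × β → ℝ} (hF : Integrable F P)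
    (hG : Integrable G P) (hF0 : 0 ≤ F) (hG0 : 0 ≤ G)
    (h : ∀ S T, MeasurableSet S → MeasurableSet T → ∫ p in S ×ˢ T, F p ∂P = ∫ p in S ×ˢ T, G p ∂P) :
    F =ᵐ[P] G := by
  have := isFiniteMeasure_withDensity_ofReal hF.2
  have hdensity : P.withDensity (fun p => ENNReal.ofReal (F p)) =
      P.withDensity fun p => ENNReal.ofReal (G p) := by
    refine Measure.ext_prod fun {S T} hS hT => ?_
    rw [withDensity_apply _ (hS.prod hT), withDensity_apply _ (hS.prod hT),
      ← ofReal_integral_eq_lintegral_ofReal hF.integrableOn (ae_of_all _ hF0),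
      ← ofReal_integral_eq_lintegral_ofReal hG.integrableOn (ae_of_all _ hG0), h S T hS hT]
  refine ((withDensity_eq_iff_of_sigmaFinite hF.aemeasurable.ennreal_ofReal
    hG.aemeasurable.ennreal_ofReal).1 hdensity).mono fun p hp => ?_
  exact (ENNReal.ofReal_eq_ofReal_iff (hF0 p) (hG0 p)).1 hp

variable {Ω Z : Type*} [MeasurableSpace Ω] [MeasurableSpace Z] {μ : Measure Ω} {f : Ω → Z}

/-- The function `u` has conditional expectation zero given `f`. -/
def CondCentered (μ : Measure Ω) (f : Ω → Z) (u : Ω → ℝ) : Prop :=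
  ∀ φ : Z → ℝ, Measurable φ → (∀ z, φ z ∈ Icc (0 : ℝ) 1) → ∫ x, u x * φ (f x) ∂μ = 0

/-- The function `s ∘ f` is the conditional probability of the event `S` given `f`. -/
structure IsCondProb (μ : Measure Ω) (f : Ω → Z) (S : Set Ω) (s : Z → ℝ) : Prop where
  measurable : Measurable s
  mem_Icc : ∀ z, s z ∈ Icc (0 : ℝ) 1
  condCentered : CondCentered μ f fun x => S.indicator 1 x - s (f x)

theorem exists_isCondProb [IsFiniteMeasure μ] (hf : Measurable f) {S : Set Ω}
    (hS : MeasurableSet S) : ∃ s : Z → ℝ, IsCondProb μ f S s := by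
  obtain ⟨s, hs, hs01, hdensity⟩ :=
    exists_density_of_le (Measure.map_mono (Measure.restrict_le_self (μ := μ) (s := S)) hf)
  refine ⟨s, hs, hs01, fun φ hφ hφ01 => ?_⟩
  have hφf : Integrable (fun x => φ (f x)) μ :=
    .of_mem_Icc 0 1 (hφ.comp hf).aemeasurable (ae_of_all _ fun _ => hφ01 _)
  have hsφ : Integrable (fun x => s (f x) * φ (f x)) μ :=
    .of_mem_Icc 0 1 ((hs.comp hf).mul (hφ.comp hf)).aemeasurable
      (ae_of_all _ fun _ => unitInterval.mul_mem (hs01 _) (hφ01 _))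
  have hind (x : Ω) : S.indicator 1 x * φ (f x) = S.indicator (fun x => φ (f x)) x := by
    by_cases hx : x ∈ S <;> simp [hx]
  calc ∫ x, (S.indicator 1 x - s (f x)) * φ (f x) ∂μ
      = ∫ x, S.indicator (fun x => φ (f x)) x ∂μ - ∫ x, s (f x) * φ (f x) ∂μ := by
        simp only [sub_mul, hind]
        exact integral_sub (hφf.indicator hS) hsφ
    _ = ∫ z, φ z ∂(μ.restrict S).map f - ∫ z, s z * φ z ∂μ.map f := by
        rw [integral_indicator hS, integral_map hf.aemeasurable hφ.aestronglyMeasurable,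
          integral_map hf.aemeasurable (by fun_prop)]
    _ = 0 := by
        rw [hdensity, integral_withDensity_ofReal hs (fun z => (hs01 z).1), sub_self]

theorem IsCondProb.abs_le_one {S : Set Ω} {s : Z → ℝ} (hs : IsCondProb μ f S s) (x : Ω) :
    |s (f x)| ≤ 1 :=
  abs_le_one_of_mem_Icc (hs.mem_Icc _)

theorem IsCondProb.abs_indicator_sub_le_one {S : Set Ω} {s : Z → ℝ} (hs : IsCondProb μ f S s)
    (x : Ω) : |S.indicator 1 x - s (f x)| ≤ 1 := by
  obtain ⟨h0, h1⟩ := hs.mem_Icc (f x)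
  by_cases hx : x ∈ S <;> simp only [hx, indicator_of_mem, indicator_of_notMem, not_false_eq_true,
    Pi.one_apply, abs_le] <;> constructor <;> linarith

/-- The kernel `K` depends on either variable only through `f`: integrated against a function that
is centered given `f`, in either variable, it vanishes. -/
structure IsDeterminedBy (μ : Measure Ω) (f : Ω → Z) (K : Ω → Ω → ℝ) : Prop where
  measurable : Measurable (Function.uncurry K)
  mem_Icc : ∀ x y, K x y ∈ Icc (0 : ℝ) 1
  integral_left : ∀ u : Ω → ℝ, Measurable u → (∀ x, |u x| ≤ 1) → CondCentered μ f u →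
    ∀ᵐ y ∂μ, ∫ x, u x * K x y ∂μ = 0
  integral_right : ∀ u : Ω → ℝ, Measurable u → (∀ x, |u x| ≤ 1) → CondCentered μ f u →
    ∀ᵐ x ∂μ, ∫ y, u y * K x y ∂μ = 0

theorem isDeterminedBy_comp (hf : Measurable f) {V : Z → Z → ℝ}
    (hV : Measurable (Function.uncurry V)) (hV01 : ∀ z z', V z z' ∈ Icc (0 : ℝ) 1) :
    IsDeterminedBy μ f fun x y => V (f x) (f y) where
  measurable := hV.comp (hf.prodMap hf)
  mem_Icc _ _ := hV01 _ _
  integral_left _ _ _ hcent := ae_of_all _ fun y =>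
    hcent (V · (f y)) (hV.comp measurable_prodMk_right) fun _ => hV01 _ _
  integral_right _ _ _ hcent := ae_of_all _ fun x =>
    hcent (V (f x)) (hV.comp measurable_prodMk_left) fun _ => hV01 _ _

namespace IsDeterminedBy

variable {K L : Ω → Ω → ℝ}

theorem swap (hK : IsDeterminedBy μ f K) : IsDeterminedBy μ f fun x y => K y x where
  measurable := hK.measurable.comp measurable_swap
  mem_Icc _ _ := hK.mem_Icc _ _
  integral_left := hK.integral_right
  integral_right := hK.integral_left

variable [IsFiniteMeasure μ]

theorem integrable (hK : IsDeterminedBy μ f K) :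
    Integrable (fun p : Ω × Ω => K p.1 p.2) (μ.prod μ) :=
  .of_mem_Icc 0 1 hK.measurable.aemeasurable (ae_of_all _ fun _ => hK.mem_Icc _ _)

theorem integrable_mul_mul (hK : IsDeterminedBy μ f K) {u v : Ω → ℝ}
    (hu : Measurable u) (hu1 : ∀ x, |u x| ≤ 1) (hv : Measurable v) (hv1 : ∀ x, |v x| ≤ 1) :
    Integrable (fun p : Ω × Ω => v p.1 * (u p.2 * K p.1 p.2)) (μ.prod μ) :=
  .of_bound ((hv.comp measurable_fst).mul
    ((hu.comp measurable_snd).mul hK.measurable)).aestronglyMeasurable 1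
    (ae_of_all _ fun _ => abs_mul_le_one (hv1 _)
      (abs_mul_le_one (hu1 _) (abs_le_one_of_mem_Icc (hK.mem_Icc _ _))))

theorem integral_mul_mul_eq_zero (hK : IsDeterminedBy μ f K) {u v : Ω → ℝ}
    (hu : Measurable u) (hu1 : ∀ x, |u x| ≤ 1) (hcent : CondCentered μ f u) (hv : Measurable v)
    (hv1 : ∀ x, |v x| ≤ 1) : ∫ p, v p.1 * (u p.2 * K p.1 p.2) ∂μ.prod μ = 0 := by
  rw [integral_prod _ (hK.integrable_mul_mul hu hu1 hv hv1)]
  refine integral_eq_zero_of_ae ((hK.integral_right u hu hu1 hcent).mono fun x hx => ?_)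
  simp only [integral_const_mul, hx, mul_zero, Pi.zero_apply]

/-- The indicators of `S` and `T` are replaced by their conditional probabilities one after the
other. -/
theorem setIntegral_prod_eq (hK : IsDeterminedBy μ f K) (hf : Measurable f) {S T : Set Ω}
    (hS : MeasurableSet S) (hT : MeasurableSet T) {s t : Z → ℝ} (hs : IsCondProb μ f S s)
    (ht : IsCondProb μ f T t) :
    ∫ p in S ×ˢ T, K p.1 p.2 ∂μ.prod μ =
      ∫ p, s (f p.1) * (t (f p.2) * K p.1 p.2) ∂μ.prod μ := by
  have hSm : Measurable (S.indicator (1 : Ω → ℝ)) := measurable_one.indicator hS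
  have hTm : Measurable (T.indicator (1 : Ω → ℝ)) := measurable_one.indicator hT
  have hS1 (x : Ω) : |S.indicator (1 : Ω → ℝ) x| ≤ 1 := by by_cases hx : x ∈ S <;> simp [hx]
  have hT1 (x : Ω) : |T.indicator (1 : Ω → ℝ) x| ≤ 1 := by by_cases hx : x ∈ T <;> simp [hx]
  have hsm : Measurable fun x => s (f x) := hs.measurable.comp hf
  have htm : Measurable fun x => t (f x) := ht.measurable.comp hf
  have hind : ∫ p in S ×ˢ T, K p.1 p.2 ∂μ.prod μ =
      ∫ p, S.indicator 1 p.1 * (T.indicator 1 p.2 * K p.1 p.2) ∂μ.prod μ := by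
    rw [← integral_indicator (hS.prod hT)]
    refine integral_congr_ae (ae_of_all _ fun p => ?_)
    by_cases h₁ : p.1 ∈ S <;> by_cases h₂ : p.2 ∈ T <;> simp [indicator, h₁, h₂]
  have hright : ∫ p, S.indicator 1 p.1 * (T.indicator 1 p.2 * K p.1 p.2) ∂μ.prod μ =
      ∫ p, S.indicator 1 p.1 * (t (f p.2) * K p.1 p.2) ∂μ.prod μ := by
    rw [← sub_eq_zero, ← integral_sub (hK.integrable_mul_mul hTm hT1 hSm hS1)
      (hK.integrable_mul_mul htm ht.abs_le_one hSm hS1)]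
    simp only [← mul_sub, ← sub_mul]
    exact hK.integral_mul_mul_eq_zero (hTm.sub htm) ht.abs_indicator_sub_le_one ht.condCentered
      hSm hS1
  have hleft : ∫ p, S.indicator 1 p.1 * (t (f p.2) * K p.1 p.2) ∂μ.prod μ =
      ∫ p, s (f p.1) * (t (f p.2) * K p.1 p.2) ∂μ.prod μ := by
    rw [← sub_eq_zero, ← integral_sub (hK.integrable_mul_mul htm ht.abs_le_one hSm hS1)
      (hK.integrable_mul_mul htm ht.abs_le_one hsm hs.abs_le_one), ← integral_prod_swap]
    simp only [← sub_mul, mul_left_comm (_ - _)]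
    exact hK.swap.integral_mul_mul_eq_zero (hSm.sub hsm) hs.abs_indicator_sub_le_one
      hs.condCentered htm ht.abs_le_one
  rw [hind, hright, hleft]

theorem ae_eq (hK : IsDeterminedBy μ f K) (hL : IsDeterminedBy μ f L) (hf : Measurable f)
    (h : ∀ g : Z × Z → ℝ, Measurable g → ∫ p, K p.1 p.2 * g (f p.1, f p.2) ∂μ.prod μ =
      ∫ p, L p.1 p.2 * g (f p.1, f p.2) ∂μ.prod μ) :
    ∀ᵐ p ∂μ.prod μ, K p.1 p.2 = L p.1 p.2 := by
  refine ae_eq_of_setIntegral_prod_eq hK.integrable hL.integrable (fun _ => (hK.mem_Icc _ _).1)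
    (fun _ => (hL.mem_Icc _ _).1) fun S T hS hT => ?_
  obtain ⟨s, hs⟩ := exists_isCondProb (μ := μ) hf hS
  obtain ⟨t, ht⟩ := exists_isCondProb (μ := μ) hf hT
  rw [hK.setIntegral_prod_eq hf hS hT hs ht, hL.setIntegral_prod_eq hf hS hT hs ht]
  simpa only [mul_comm, mul_left_comm] using h (fun z => s z.1 * t z.2)
    ((hs.measurable.comp measurable_fst).mul (ht.measurable.comp measurable_snd))

end IsDeterminedBy

end Factoring

section CommonFactor

variable {Ω Ω' Z : Type*} [MeasurableSpace Ω] [MeasurableSpace Ω']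
  {μ : Measure Ω} {μ' : Measure Ω'} {W : Ω → Ω → ℝ} {W' : Ω' → Ω' → ℝ} {f : Ω → Z} {f' : Ω' → Z}

theorem IsGraphonOn.ae_eq_min_swap [SFinite μ] (hW : IsGraphonOn W) {s : Z × Z → ℝ}
    (h : ∀ᵐ p ∂μ.prod μ, W p.1 p.2 = s (f p.1, f p.2)) :
    ∀ᵐ p ∂μ.prod μ, W p.1 p.2 = min (s (f p.1, f p.2)) (s (f p.2, f p.1)) := by
  filter_upwards [h, Measure.measurePreserving_swap.quasiMeasurePreserving.ae h] with p hp hswap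
  simp only [Prod.fst_swap, Prod.snd_swap] at hswap
  rw [← hp, ← hswap, hW.symm p.2, min_self]

variable [MeasurableSpace Z]

theorem IsGraphonOn.pairLaw_one_le_zero (hW : IsGraphonOn W) (hf : Measurable f) :
    pairLaw μ W f 1 ≤ pairLaw μ W f 0 := by
  refine Measure.map_mono (withDensity_mono (ae_of_all _ fun p => ENNReal.ofReal_le_ofReal ?_))
    (hf.prodMap hf)
  rw [pow_one, pow_zero]
  exact (hW.mem_Icc _ _).2

variable [IsProbabilityMeasure μ] [IsProbabilityMeasure μ']

theorem IsGraphonOn.ae_iid_isDeterminedBy_anchorMap [MeasurableSpace.CountablyGenerated Ω]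
    (hW : IsGraphonOn W) : ∀ᵐ a ∂iid μ ℕ, IsDeterminedBy μ (anchorMap μ hW a) W := by
  filter_upwards [(hW.isGraphonOn_codegree (μ := μ)).ae_iid_integral_mul_eq_zero (μ := μ)]
    with a ha
  have hright (u : Ω → ℝ) (hu : Measurable u) (hu1 : ∀ x, |u x| ≤ 1)
      (hcent : CondCentered μ (anchorMap μ hW a) u) : ∀ᵐ x ∂μ, ∫ y, u y * W x y ∂μ = 0 :=
    hW.integral_mul_eq_zero_of_codegree hu hu1
      (ha u (.of_bound hu.aestronglyMeasurable 1 (ae_of_all _ hu1)) fun i =>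
        hcent (fun z => z i) (by fun_prop) fun z => (z i).2)
  exact ⟨hW.measurable, hW.mem_Icc, by simpa only [hW.symm] using hright, hright⟩

theorem IsDeterminedBy.ae_eq_of_pairLaw_eq_withDensity (hdet : IsDeterminedBy μ f W)
    (hW : IsGraphonOn W) (hf : Measurable f) {s : Z × Z → ℝ} (hs : Measurable s)
    (hs01 : ∀ z, s z ∈ Icc (0 : ℝ) 1)
    (hdensity : pairLaw μ W f 1 = (pairLaw μ W f 0).withDensity fun z => ENNReal.ofReal (s z)) :
    ∀ᵐ p ∂μ.prod μ, W p.1 p.2 = s (f p.1, f p.2) := by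
  refine hdet.ae_eq (isDeterminedBy_comp (V := fun z z' => s (z, z')) hf hs fun _ _ => hs01 _) hf
    fun g hg => ?_
  calc ∫ p, W p.1 p.2 * g (f p.1, f p.2) ∂μ.prod μ
      = ∫ z, g z ∂pairLaw μ W f 1 := by simp only [integral_pairLaw hW hf 1 hg, pow_one]
    _ = ∫ z, s z * g z ∂pairLaw μ W f 0 := by
        rw [hdensity, integral_withDensity_ofReal hs fun z => (hs01 z).1]
    _ = ∫ p, s (f p.1, f p.2) * g (f p.1, f p.2) ∂μ.prod μ := by
        rw [integral_pairLaw hW hf 0 (g := fun z => s z * g z) (hs.mul hg)]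
        simp only [pow_zero, one_mul]

/-- A version of the conditional expectation of `W` given `f` in both variables can be read off the
pair laws, hence serves for `W'` as well. -/
theorem exists_factor_of_pairLaw_eq (hW : IsGraphonOn W) (hW' : IsGraphonOn W')
    (hf : Measurable f) (hf' : Measurable f') (hdet : IsDeterminedBy μ f W)
    (hdet' : IsDeterminedBy μ' f' W')
    (h : ∀ k : Fin 2, pairLaw μ W f k = pairLaw μ' W' f' k) :
    ∃ V : Z → Z → ℝ, IsGraphonOn V ∧ (∀ᵐ p ∂μ.prod μ, W p.1 p.2 = V (f p.1) (f p.2)) ∧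
      ∀ᵐ p ∂μ'.prod μ', W' p.1 p.2 = V (f' p.1) (f' p.2) := by
  have := hW.isFiniteMeasure_pairLaw (μ := μ) (f := f) 0
  obtain ⟨s, hs, hs01, hdensity⟩ := exists_density_of_le (hW.pairLaw_one_le_zero (μ := μ) hf)
  have hdensity' : pairLaw μ' W' f' 1 =
      (pairLaw μ' W' f' 0).withDensity fun z => ENNReal.ofReal (s z) :=
    (h 1).symm.trans (hdensity.trans (congrArg (Measure.withDensity · _) (h 0)))
  refine ⟨fun z z' => min (s (z, z')) (s (z', z)), ⟨hs.min (hs.comp measurable_swap),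
    fun z z' => min_comm _ _, fun z z' => ⟨le_min (hs01 _).1 (hs01 _).1,
      (min_le_left _ _).trans (hs01 _).2⟩⟩, ?_, ?_⟩
  · exact hW.ae_eq_min_swap (hdet.ae_eq_of_pairLaw_eq_withDensity hW hf hs hs01 hdensity)
  · exact hW'.ae_eq_min_swap (hdet'.ae_eq_of_pairLaw_eq_withDensity hW' hf' hs hs01 hdensity')

theorem map_eq_of_pairLaw_eq (hf : Measurable f) (hf' : Measurable f')
    (h : pairLaw μ W f 0 = pairLaw μ' W' f' 0) : μ.map f = μ'.map f' := by
  have := Measure.isProbabilityMeasure_map (μ := μ) hf.aemeasurable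
  have := Measure.isProbabilityMeasure_map (μ := μ') hf'.aemeasurable
  rw [pairLaw_zero hf, pairLaw_zero hf'] at h
  simpa using congrArg (Measure.map Prod.fst) h

end CommonFactor

section Uniform

open ProbabilityTheory

instance : IsProbabilityMeasure μ01 :=
  ⟨by rw [Measure.restrict_apply_univ, Real.volume_Icc, sub_zero, ENNReal.ofReal_one]⟩

theorem μ01_real_Iic {t : ℝ} (ht : t ∈ Icc (0 : ℝ) 1) : μ01.real (Iic t) = t := by
  rw [measureReal_restrict_apply measurableSet_Iic, inter_comm, ← Ici_inter_Iic, inter_assoc,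
    Iic_inter_Iic, inf_eq_right.2 ht.2, Ici_inter_Iic, Real.volume_real_Icc_of_le ht.1, sub_zero]

variable {ν : Measure ℝ}

theorem cdf_eq_of_forall_Ioo (h : ∀ t ∈ Ioo (0 : ℝ) 1, cdf ν t = t) (t : ℝ) :
    cdf ν t = max 0 (min 1 t) := by
  rcases le_or_gt t 0 with h0 | h0
  · rw [min_eq_right (h0.trans zero_le_one), max_eq_left h0]
    refine le_antisymm (le_of_forall_gt_imp_ge_of_dense fun s hs => ?_) (cdf_nonneg ν t)
    rcases lt_or_ge s 1 with hs1 | hs1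
    · exact ((cdf ν).mono (h0.trans hs.le)).trans_eq (h s ⟨hs, hs1⟩)
    · exact (cdf_le_one ν t).trans hs1
  rcases lt_or_ge t 1 with h1 | h1
  · rw [min_eq_right h1.le, max_eq_right h0.le, h t ⟨h0, h1⟩]
  · rw [min_eq_left h1, max_eq_right zero_le_one]
    refine le_antisymm (cdf_le_one ν t) (le_of_forall_lt_imp_le_of_dense fun s hs => ?_)
    rcases lt_or_ge 0 s with hs0 | hs0
    · exact (h s ⟨hs0, hs⟩).symm.trans_le ((cdf ν).mono (hs.le.trans h1))
    · exact hs0.trans (cdf_nonneg ν t)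

variable [IsProbabilityMeasure ν]

theorem continuous_cdf [NullSingletonClass ν] : Continuous (cdf ν) := by
  refine continuous_iff_continuousAt.2 fun s => ?_
  rw [(cdf ν).mono.continuousAt_iff_leftLim_eq_rightLim, (cdf ν).rightLim_eq]
  have hjump := (cdf ν).measure_singleton s
  rw [measure_cdf, measure_singleton, eq_comm, ENNReal.ofReal_eq_zero, sub_nonpos] at hjump
  exact le_antisymm ((cdf ν).mono.leftLim_le le_rfl) hjump

theorem eq_μ01_of_ae_cdf_eq_self [NullSingletonClass ν] (h : ∀ᵐ t ∂ν, cdf ν t = t) : ν = μ01 := by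
  have hIoo (t : ℝ) (ht : t ∈ Ioo (0 : ℝ) 1) : cdf ν t = t := by
    obtain ⟨u, hu⟩ : ∃ u, cdf ν u = t := mem_range_of_exists_le_of_exists_ge continuous_cdf
      (((tendsto_cdf_atBot ν).eventually_le_const ht.1).exists)
      (((tendsto_cdf_atTop ν).eventually_const_le ht.2).exists)
    apply le_antisymm
    · calc cdf ν t = ν.real (Iio t) := by rw [cdf_eq_real, measureReal_congr Iio_ae_eq_Iic]
        _ ≤ ν.real (Iic u) := ENNReal.toReal_mono (measure_ne_top _ _)
            (measure_mono_ae (h.mono fun s hs hst => le_of_not_gt fun hus =>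
              ((cdf ν).mono hus.le).not_gt (by rwa [hs, hu])))
        _ = t := by rw [← cdf_eq_real, hu]
    · calc t = ν.real (Iic u) := by rw [← cdf_eq_real, hu]
        _ ≤ ν.real (Iic t) := ENNReal.toReal_mono (measure_ne_top _ _)
            (measure_mono_ae (h.mono fun s hs hsu =>
              hs.symm.trans_le (((cdf ν).mono hsu).trans_eq hu)))
        _ = cdf ν t := (cdf_eq_real ν t).symm
  refine Measure.eq_of_cdf ν μ01 (StieltjesFunction.ext fun t => ?_)
  rw [cdf_eq_of_forall_Ioo hIoo, cdf_eq_of_forall_Ioo fun t ht =>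
    (cdf_eq_real μ01 t).trans (μ01_real_Iic (Ioo_subset_Icc_self ht))]

end Uniform

section Rank

variable {Ω L : Type*} [MeasurableSpace Ω] {μ : Measure Ω} [LinearOrder L] {k : Ω → L}

theorem measure_eq_zero_of_total [SFinite μ] {r : Ω → Ω → Prop}
    (hr : MeasurableSet {p : Ω × Ω | r p.1 p.2}) (htotal : ∀ x y, r x y ∨ r y x) {S : Set Ω}
    (hS : MeasurableSet S) (h : ∀ x ∈ S, μ (S ∩ {y | r x y}) = 0) : μ S = 0 := by
  have hae : ∀ᵐ x ∂μ.restrict S, ∀ᵐ y ∂μ.restrict S, ¬ r x y :=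
    (ae_restrict_mem hS).mono fun x hx => by
      rw [ae_restrict_iff' hS, ae_iff]
      simpa only [Classical.not_imp, not_not] using! h x hx
  have hswap : ∀ᵐ x ∂μ.restrict S, ∀ᵐ y ∂μ.restrict S, ¬ r y x :=
    (Measure.ae_ae_comm hr.compl).1 hae
  by_contra hne
  have : NeZero (μ.restrict S) := ⟨fun h0 => hne (Measure.restrict_eq_zero.1 h0)⟩
  obtain ⟨x, hx, hx'⟩ := (hae.and hswap).exists
  obtain ⟨y, hy, hy'⟩ := (hx.and hx').exists
  exact (htotal x y).elim hy hy'

/-- The rank of `x` in the order pulled back along the key `k`, as a fraction of the whole space.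
When no key is repeated and `μ` has no atoms it is uniformly distributed on `[0,1]`. -/
noncomputable def rank (μ : Measure Ω) (k : Ω → L) (x : Ω) : ℝ :=
  μ.real {y | k y < k x}

variable [IsProbabilityMeasure μ]

theorem rank_mono {x y : Ω} (h : k x ≤ k y) : rank μ k x ≤ rank μ k y :=
  measureReal_mono fun _ hz => lt_of_lt_of_le hz h

theorem measurable_rank (hk : MeasurableSet {p : Ω × Ω | k p.1 < k p.2}) :
    Measurable (rank μ k) :=
  (measurable_measure_prodMk_right hk).ennreal_toReal

theorem measure_Ico_key_eq_zero (hk : MeasurableSet {p : Ω × Ω | k p.1 < k p.2}) {x y : Ω}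
    (h : rank μ k x = rank μ k y) : μ {z | k x ≤ k z ∧ k z < k y} = 0 := by
  have hlt (x : Ω) : MeasurableSet {z | k z < k x} := measurable_prodMk_right hk
  rcases le_total (k y) (k x) with hyx | hxy
  · convert measure_empty (μ := μ)
    exact eq_empty_of_forall_notMem fun z hz => (hz.2.trans_le hyx).not_ge hz.1
  · rw [← measureReal_eq_zero_iff]
    have hsub : {z | k z < k x} ⊆ {z | k z < k y} := fun z hz => lt_of_lt_of_le hz hxy
    calc μ.real {z | k x ≤ k z ∧ k z < k y} = μ.real ({z | k z < k y} \ {z | k z < k x}) := by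
          congr 1; ext z; simp [and_comm]
      _ = rank μ k y - rank μ k x := measureReal_sdiff hsub (hlt x)
      _ = 0 := sub_eq_zero.2 h.symm

/-- The points of a given rank that precede any one of them form a null set, hence so do all of
them. -/
theorem measure_rank_eq [NullSingletonClass μ] (hinj : Function.Injective k)
    (hk : MeasurableSet {p : Ω × Ω | k p.1 < k p.2}) (t : ℝ) : μ {x | rank μ k x = t} = 0 := by
  have hlt (x : Ω) : MeasurableSet {z | k z < k x} := measurable_prodMk_right hk
  have hle : MeasurableSet {p : Ω × Ω | k p.1 ≤ k p.2} := by
    convert (measurable_swap hk).compl using 1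
    ext p; simp
  have hE : MeasurableSet {x | rank μ k x = t} := measurable_rank hk (measurableSet_singleton t)
  refine measure_eq_zero_of_total (r := fun x y => k y ≤ k x) (measurable_swap hle)
    (fun x y => le_total _ _) hE fun x (hx : rank μ k x = t) => ?_
  have hpred : μ ({y | rank μ k y = t} ∩ {y | k y < k x}) = 0 :=
    measure_eq_zero_of_total (r := fun x y => k x ≤ k y) hle (fun x y => le_total _ _)
      (hE.inter (hlt x)) fun y hy =>
        measure_mono_null (t := {z | k y ≤ k z ∧ k z < k x}) (fun z hz => ⟨hz.2, hz.1.2⟩)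
          (measure_Ico_key_eq_zero hk (hy.1.trans hx.symm))
  refine measure_mono_null (fun y hy => ?_) (measure_union_null hpred (measure_singleton x))
  exact hy.2.lt_or_eq.imp (fun h => ⟨hy.1, h⟩) fun h => hinj h

theorem measurePreserving_rank [NullSingletonClass μ] (hinj : Function.Injective k)
    (hk : MeasurableSet {p : Ω × Ω | k p.1 < k p.2}) : MeasurePreserving (rank μ k) μ μ01 := by
  have hrank := measurable_rank (μ := μ) hk
  have hnull := measure_rank_eq (μ := μ) hinj hk
  have := Measure.isProbabilityMeasure_map (μ := μ) hrank.aemeasurable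
  have : NullSingletonClass (μ.map (rank μ k)) :=
    ⟨fun t => (Measure.map_apply hrank (measurableSet_singleton t)).trans (hnull t)⟩
  refine ⟨hrank, eq_μ01_of_ae_cdf_eq_self ?_⟩
  refine (ae_map_iff hrank.aemeasurable (measurableSet_eq_fun
    (ProbabilityTheory.cdf _).mono.measurable measurable_id)).2 (ae_of_all _ fun x => ?_)
  rw [ProbabilityTheory.cdf_eq_real, map_measureReal_apply hrank measurableSet_Iic]
  apply le_antisymm
  · refine (measureReal_mono (s₂ := {y | k y < k x} ∪ {y | rank μ k y = rank μ k x})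
      fun y hy => ?_).trans_eq (measureReal_congr (union_ae_eq_left_of_ae_eq_empty
        (ae_eq_empty.2 (hnull _))))
    exact (lt_or_ge (k y) (k x)).imp_right fun h => le_antisymm hy (rank_mono h)
  · exact measureReal_mono fun y hy => rank_mono (le_of_lt hy)

end Rank

section Quantile

/-- The quantile function of a probability measure on the unit interval. -/
noncomputable def quantile (P : Measure unitInterval) (t : ℝ) : unitInterval :=
  sInf {s | t ≤ P.real (Iic s)}

theorem monotone_quantile (P : Measure unitInterval) : Monotone (quantile P) := fun _ _ h =>
  sInf_le_sInf fun _ hs => h.trans hs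

variable {Ω L : Type*} [MeasurableSpace Ω] {μ : Measure Ω} [IsProbabilityMeasure μ] [LinearOrder L]
  {k : Ω → L} {g : Ω → unitInterval}

theorem ae_quantile_rank_eq (hrank : MeasurePreserving (rank μ k) μ μ01) (hg : Measurable g)
    (hkg : ∀ x y, k x < k y → g x ≤ g y) : ∀ᵐ x ∂μ, quantile (μ.map g) (rank μ k x) = g x := by
  let F (s : unitInterval) : ℝ := (μ.map g).real (Iic s)
  have hF (s : unitInterval) : F s = μ.real {x | g x ≤ s} :=
    map_measureReal_apply hg measurableSet_Iic
  have hle (x : Ω) : rank μ k x ≤ F (g x) :=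
    (measureReal_mono fun y hy => hkg y x hy).trans_eq (hF _).symm
  have hlevel (s : unitInterval) : ∀ᵐ x ∂μ, rank μ k x ≤ F s → g x ≤ s := by
    have hsub : {x | g x ≤ s} ⊆ {x | rank μ k x ≤ F s} := fun x hx =>
      (hle x).trans (measureReal_mono (Iic_subset_Iic.2 hx))
    have hmeas : μ.real {x | rank μ k x ≤ F s} = μ.real {x | g x ≤ s} := by
      have hunif := μ01_real_Iic (t := F s) ⟨measureReal_nonneg, measureReal_le_one⟩
      rw [← hrank.map_eq, map_measureReal_apply hrank.measurable measurableSet_Iic] at hunif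
      exact hunif.trans (hF s)
    have hdiff : μ.real ({x | rank μ k x ≤ F s} \ {x | g x ≤ s}) = 0 := by
      rw [measureReal_sdiff hsub (hg measurableSet_Iic), hmeas, sub_self]
    exact ae_le_set.2 ((measureReal_eq_zero_iff).1 hdiff)
  obtain ⟨D, hDc, hD⟩ := TopologicalSpace.exists_countable_dense unitInterval
  filter_upwards [(ae_ball_iff hDc).2 fun s _ => hlevel s] with x hx
  refine le_antisymm (sInf_le (hle x)) (le_sInf fun s hs => le_of_not_gt fun hsg => ?_)
  obtain ⟨d, hd, hsd, hdg⟩ := hD.exists_between hsg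
  have hFsd : F s ≤ F d := measureReal_mono (Iic_subset_Iic.2 hsd.le)
  exact (hx d hd (hs.trans hFsd)).not_gt hdg

end Quantile

section Transfer

open MeasureTheory.Measure

variable {Ω : Type*} [MeasurableSpace Ω] [StandardBorelSpace Ω] {μ : Measure Ω}
  [IsProbabilityMeasure μ] [NullSingletonClass μ]

/-- The key compares values of `g` first, so that the rank determines `g`, and breaks ties by an
embedding of `Ω` into `ℝ`, so that the rank is uniform even where `g` is constant. -/
theorem exists_measurePreserving_ae_quantile_eq {g : Ω → unitInterval} (hg : Measurable g) :
    ∃ φ : Ω → ℝ, MeasurePreserving φ μ μ01 ∧ ∀ᵐ x ∂μ, quantile (μ.map g) (φ x) = g x := by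
  have he := measurableEmbedding_embeddingReal Ω
  let k (x : Ω) : unitInterval ×ₗ ℝ := toLex (g x, embeddingReal Ω x)
  have hinj : Function.Injective k := fun x y hxy =>
    he.injective (congrArg (fun p => (ofLex p).2) hxy)
  have hk : MeasurableSet {p : Ω × Ω | k p.1 < k p.2} := by
    have hg₁ : Measurable fun p : Ω × Ω => g p.1 := hg.comp measurable_fst
    have hg₂ : Measurable fun p : Ω × Ω => g p.2 := hg.comp measurable_snd
    simp only [k, Prod.Lex.toLex_lt_toLex]
    exact (measurableSet_lt hg₁ hg₂).union ((measurableSet_eq_fun hg₁ hg₂).inter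
      (measurableSet_lt (he.measurable.comp measurable_fst) (he.measurable.comp measurable_snd)))
  have hkg (x y : Ω) (h : k x < k y) : g x ≤ g y :=
    (Prod.Lex.toLex_lt_toLex.1 h).elim le_of_lt fun h => h.1.le
  exact ⟨rank μ k, measurePreserving_rank hinj hk,
    ae_quantile_rank_eq (measurePreserving_rank hinj hk) hg hkg⟩

theorem exists_measurePreserving_factor {Ω' Z : Type*} [MeasurableSpace Ω']
    [StandardBorelSpace Ω'] {μ' : Measure Ω'} [IsProbabilityMeasure μ'] [NullSingletonClass μ']
    [MeasurableSpace Z] [StandardBorelSpace Z] [Nonempty Z] {f : Ω → Z} {f' : Ω' → Z}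
    (hf : Measurable f) (hf' : Measurable f') (h : μ.map f = μ'.map f') :
    ∃ (r : ℝ → Z) (φ : Ω → ℝ) (φ' : Ω' → ℝ), Measurable r ∧ MeasurePreserving φ μ μ01 ∧
      MeasurePreserving φ' μ' μ01 ∧ (∀ᵐ x ∂μ, f x = r (φ x)) ∧ ∀ᵐ x ∂μ', f' x = r (φ' x) := by
  obtain ⟨e, he⟩ : ∃ e : Z → unitInterval, MeasurableEmbedding e :=
    ⟨_, measurableEmbedding_sigmoid_comp_embeddingReal Z⟩
  obtain ⟨φ, hφ, hφf⟩ :=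
    exists_measurePreserving_ae_quantile_eq (μ := μ) (he.measurable.comp hf)
  obtain ⟨φ', hφ', hφf'⟩ :=
    exists_measurePreserving_ae_quantile_eq (μ := μ') (he.measurable.comp hf')
  have hmap : μ.map (e ∘ f) = μ'.map (e ∘ f') := by
    rw [← Measure.map_map he.measurable hf, h, Measure.map_map he.measurable hf']
  refine ⟨he.invFun ∘ quantile (μ.map (e ∘ f)), φ, φ',
    he.measurable_invFun.comp (monotone_quantile _).measurable, hφ, hφ', ?_, ?_⟩
  · filter_upwards [hφf] with x hx
    rw [Function.comp_apply, hx, Function.comp_apply, he.leftInverse_invFun]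
  · filter_upwards [hφf'] with x hx
    rw [Function.comp_apply, hmap, hx, Function.comp_apply, he.leftInverse_invFun]

end Transfer

section WeakIsomorphism

variable {Ω Ω' : Type*} [MeasurableSpace Ω] [MeasurableSpace Ω'] {μ : Measure Ω}
  {μ' : Measure Ω'} {W : Ω → Ω → ℝ} {W' : Ω' → Ω' → ℝ}

/-- Weak isomorphism of kernels on two probability spaces: up to null sets both are pulled back
from one graphon on `[0,1]`. -/
def WeaklyIsomorphic (μ : Measure Ω) (μ' : Measure Ω') (W : Ω → Ω → ℝ) (W' : Ω' → Ω' → ℝ) : Prop :=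
  ∃ (U : ℝ → ℝ → ℝ) (φ : Ω → ℝ) (φ' : Ω' → ℝ), IsGraphon U ∧ MeasurePreserving φ μ μ01 ∧
    MeasurePreserving φ' μ' μ01 ∧ (∀ᵐ p ∂μ.prod μ, W p.1 p.2 = U (φ p.1) (φ p.2)) ∧
    ∀ᵐ p ∂μ'.prod μ', W' p.1 p.2 = U (φ' p.1) (φ' p.2)

theorem ae_eq_comp_of_ae_eq_comp [SFinite μ] {Z : Type*} {V : Z → Z → ℝ} {f : Ω → Z} {r : ℝ → Z}
    {φ : Ω → ℝ} (hW : ∀ᵐ p ∂μ.prod μ, W p.1 p.2 = V (f p.1) (f p.2))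
    (hf : ∀ᵐ x ∂μ, f x = r (φ x)) :
    ∀ᵐ p ∂μ.prod μ, W p.1 p.2 = V (r (φ p.1)) (r (φ p.2)) := by
  filter_upwards [hW, Measure.quasiMeasurePreserving_fst.ae hf,
    Measure.quasiMeasurePreserving_snd.ae hf] with p hp h₁ h₂
  rw [hp, h₁, h₂]

variable [IsProbabilityMeasure μ] [IsProbabilityMeasure μ']

theorem HomEquivalent.weaklyIsomorphic [StandardBorelSpace Ω] [StandardBorelSpace Ω']
    [NullSingletonClass μ] [NullSingletonClass μ'] (h : HomEquivalent μ μ' W W')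
    (hW : IsGraphonOn W) (hW' : IsGraphonOn W') : WeaklyIsomorphic μ μ' W W' := by
  obtain ⟨a, a', hdet, hdet', hlaw⟩ := h.exists_anchors hW hW'
    hW.ae_iid_isDeterminedBy_anchorMap hW'.ae_iid_isDeterminedBy_anchorMap
  have hf := measurable_anchorMap (μ := μ) hW a
  have hf' := measurable_anchorMap (μ := μ') hW' a'
  obtain ⟨V, hV, hWV, hWV'⟩ := exists_factor_of_pairLaw_eq hW hW' hf hf' hdet hdet' hlaw
  obtain ⟨r, φ, φ', hr, hφ, hφ', hfr, hfr'⟩ :=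
    exists_measurePreserving_factor hf hf' (map_eq_of_pairLaw_eq hf hf' (hlaw 0))
  exact ⟨fun s t => V (r s) (r t), φ, φ', isGraphon_iff_isGraphonOn.2 (hV.comp hr), hφ, hφ',
    ae_eq_comp_of_ae_eq_comp hWV hfr, ae_eq_comp_of_ae_eq_comp hWV' hfr'⟩

theorem homDensityOn_eq_of_ae_eq_comp (hW' : IsGraphonOn W') {φ : Ω → Ω'}
    (hφ : MeasurePreserving φ μ μ') (h : ∀ᵐ p ∂μ.prod μ, W p.1 p.2 = W' (φ p.1) (φ p.2))
    {n : ℕ} (F : SimpleGraph (Fin n)) : homDensityOn μ F W = homDensityOn μ' F W' := by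
  classical
  have hpairs : ∀ᵐ x ∂Measure.pi fun _ : Fin n => μ, ∀ p : Fin n × Fin n, p.1 ≠ p.2 →
      W (x p.1) (x p.2) = W' (φ (x p.1)) (φ (x p.2)) :=
    ae_all_iff.2 fun p => eventually_imp_distrib_left.2 fun hp =>
      (measurePreserving_pair_pi μ hp).quasiMeasurePreserving.ae h
  rw [homDensityOn, homDensityOn, ← integral_comp_measurePreserving
    (measurePreserving_pi _ _ fun _ => hφ)
    (hW'.measurable_prod _ (fun _ => measurable_pi_apply _) fun _ => measurable_pi_apply _)]
  refine integral_congr_ae (hpairs.mono fun x hx => Finset.prod_congr rfl fun p hp => hx p ?_)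
  exact (Finset.mem_filter.1 hp).2.1.ne

theorem WeaklyIsomorphic.homEquivalent (h : WeaklyIsomorphic μ μ' W W') :
    HomEquivalent μ μ' W W' := by
  obtain ⟨U, φ, φ', hU, hφ, hφ', hWU, hWU'⟩ := h
  have hU := isGraphon_iff_isGraphonOn.1 hU
  intro n F
  rw [homDensityOn_eq_of_ae_eq_comp hU hφ hWU, homDensityOn_eq_of_ae_eq_comp hU hφ' hWU']

theorem homDensity_eq_iff_weakly_isomorphic_general [StandardBorelSpace Ω] [StandardBorelSpace Ω']
    [NullSingletonClass μ] [NullSingletonClass μ'] (hW : IsGraphonOn W) (hW' : IsGraphonOn W') :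
    HomEquivalent μ μ' W W' ↔ WeaklyIsomorphic μ μ' W W' :=
  ⟨fun h => h.weaklyIsomorphic hW hW', WeaklyIsomorphic.homEquivalent⟩

theorem exists_isMeasurePreservingMap_ae_eq {φ : ℝ → ℝ} (hφ : MeasurePreserving φ μ01 μ01) :
    ∃ ψ, IsMeasurePreservingMap ψ ∧ ψ =ᵐ[μ01] φ := by
  have hmem : ∀ᵐ x ∂μ01, φ x ∈ Icc (0 : ℝ) 1 :=
    hφ.quasiMeasurePreserving.ae (ae_restrict_mem measurableSet_Icc)
  have hclamp : (fun x => (projIcc 0 1 zero_le_one (φ x) : ℝ)) =ᵐ[μ01] φ :=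
    hmem.mono fun x hx => by simp only [projIcc_of_mem zero_le_one hx]
  have hmeas : Measurable fun x => (projIcc 0 1 zero_le_one (φ x) : ℝ) :=
    (continuous_subtype_val.comp continuous_projIcc).measurable.comp hφ.measurable
  exact ⟨_, ⟨fun x _ => Subtype.prop _, hmeas, (Measure.map_congr hclamp).trans hφ.map_eq⟩, hclamp⟩

theorem weaklyIsomorphic_μ01_iff {W W' : ℝ → ℝ → ℝ} :
    WeaklyIsomorphic μ01 μ01 W W' ↔ ∃ (U : ℝ → ℝ → ℝ) (φ φ' : ℝ → ℝ), IsGraphon U ∧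
      IsMeasurePreservingMap φ ∧ IsMeasurePreservingMap φ' ∧
      (∀ᵐ p ∂(μ01.prod μ01), W p.1 p.2 = U (φ p.1) (φ p.2)) ∧
      (∀ᵐ p ∂(μ01.prod μ01), W' p.1 p.2 = U (φ' p.1) (φ' p.2)) := by
  constructor
  · rintro ⟨U, φ, φ', hU, hφ, hφ', hWU, hWU'⟩
    obtain ⟨ψ, hψ, hφψ⟩ := exists_isMeasurePreservingMap_ae_eq hφ
    obtain ⟨ψ', hψ', hφψ'⟩ := exists_isMeasurePreservingMap_ae_eq hφ'
    exact ⟨U, ψ, ψ', hU, hψ, hψ', ae_eq_comp_of_ae_eq_comp (r := id) hWU hφψ.symm,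
      ae_eq_comp_of_ae_eq_comp (r := id) hWU' hφψ'.symm⟩
  · rintro ⟨U, φ, φ', hU, hφ, hφ', hWU, hWU'⟩
    exact ⟨U, φ, φ', hU, hφ.2, hφ'.2, hWU, hWU'⟩

end WeakIsomorphism

/-- Two graphons have the same homomorphism densities over all finite simple graphs
if and only if they are weakly isomorphic. -/
theorem homDensity_eq_iff_weakly_isomorphic (W W' : ℝ → ℝ → ℝ)
    (hW : IsGraphon W) (hW' : IsGraphon W') :
    (∀ (n : ℕ) (F : SimpleGraph (Fin n)), homDensity F W = homDensity F W') ↔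
    (∃ (U : ℝ → ℝ → ℝ) (φ φ' : ℝ → ℝ), IsGraphon U ∧
      IsMeasurePreservingMap φ ∧ IsMeasurePreservingMap φ' ∧
      (∀ᵐ p ∂(μ01.prod μ01), W p.1 p.2 = U (φ p.1) (φ p.2)) ∧
      (∀ᵐ p ∂(μ01.prod μ01), W' p.1 p.2 = U (φ' p.1) (φ' p.2))) :=
  (homDensity_eq_iff_weakly_isomorphic_general (isGraphon_iff_isGraphonOn.1 hW)
    (isGraphon_iff_isGraphonOn.1 hW')).trans weaklyIsomorphic_μ01_iff
end

section
/- The space of graphons with the cut distance is compact as a pseudometric space: every sequence (W_n) of graphons has a subsequence (W_{n_j}) and a graphon W such that δ_□(W_{n_j}, W) → 0 as j → ∞. -/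
open MeasureTheory Set Filter

/-!
A pseudometric space is compact when it is totally bounded and complete.

Total boundedness: removing from a kernel `ε` times a signed rectangle on which it violates the cut
norm bound `ε` lowers its squared `L²` norm by more than `ε²`, so boundedly many steps approximate
a graphon by a signed sum of rectangles. Such a step kernel is a fixed function of the codes of the
two points, where the code of a point records in which sides of the rectangles it lies. After a
rearrangement of `[0, 1]` the code is nearly monotone, hence nearly one of finitely many step
functions.

Completeness: along a sequence whose consecutive cut distances are summable, rearrange the graphons
so that consecutive ones are close in cut norm without any further rearrangement. Each cut norm
bound is a family of conditions on integrals over rectangles, so it passes to a weak limit.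
-/

section HilbertSpace

variable {E ι : Type*} [NormedAddCommGroup E] [InnerProductSpace ℝ E]

theorem norm_sub_sign_smul_sq_lt {f k : E} {ε : ℝ} (hε : 0 < ε) (hk : ‖k‖ ≤ 1)
    (hfk : ε < |inner ℝ k f|) :
    ‖f - (ε * (SignType.sign (inner ℝ k f) : ℝ)) • k‖ ^ 2 < ‖f‖ ^ 2 - ε ^ 2 := by
  set t : ℝ := inner ℝ k f
  set s : ℝ := (SignType.sign t : ℝ)
  have hst : s * t = |t| := sign_mul_self t
  have hs : s ^ 2 ≤ 1 := by
    simp only [s]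
    cases SignType.sign t <;> norm_num
  have hk2 : s ^ 2 * ‖k‖ ^ 2 ≤ 1 :=
    mul_le_one₀ hs (sq_nonneg _) (pow_le_one₀ (norm_nonneg k) hk)
  calc ‖f - (ε * s) • k‖ ^ 2
      = ‖f‖ ^ 2 - 2 * ε * (s * t) + ε ^ 2 * (s ^ 2 * ‖k‖ ^ 2) := by
        rw [norm_sub_sq_real, real_inner_smul_right, real_inner_comm, norm_smul, mul_pow,
          Real.norm_eq_abs, sq_abs]
        ring
    _ ≤ ‖f‖ ^ 2 - 2 * ε * |t| + ε ^ 2 := by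
        rw [hst]
        gcongr
        exact mul_le_of_le_one_right (sq_nonneg ε) hk2
    _ < ‖f‖ ^ 2 - ε ^ 2 := by nlinarith

theorem exists_sign_sum_abs_inner_sub_le [Nonempty ι] {k : ι → E} (hk : ∀ j, ‖k j‖ ≤ 1)
    {ε : ℝ} (hε : 0 < ε) (m : ℕ) {f : E} (hf : ‖f‖ ^ 2 < m * ε ^ 2) :
    ∃ (s : Fin m → SignType) (a : Fin m → ι),
      ∀ j, |inner ℝ (k j) (f - ε • ∑ i, (s i : ℝ) • k (a i))| ≤ ε := by
  induction m generalizing f with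
  | zero => exact absurd hf (by simp)
  | succ m ih =>
    by_cases hsmall : ∀ j, |inner ℝ (k j) f| ≤ ε
    · exact ⟨fun _ => 0, fun _ => Classical.arbitrary ι, by simpa using hsmall⟩
    push Not at hsmall
    obtain ⟨j₀, hj₀⟩ := hsmall
    have hdecr := norm_sub_sign_smul_sq_lt hε (hk j₀) hj₀
    obtain ⟨s, a, hsa⟩ := ih (hdecr.trans (by push_cast at hf; linarith))
    refine ⟨Fin.cons (SignType.sign (inner ℝ (k j₀) f)) s, Fin.cons j₀ a, fun j => ?_⟩
    convert hsa j using 3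
    rw [Fin.sum_univ_succ, smul_add, smul_smul, ← sub_sub]
    simp only [Fin.cons_zero, Fin.cons_succ]

theorem exists_tendsto_inner_of_norm_le [CompleteSpace E] (l : Ultrafilter ι) {v : ι → E} {C : ℝ}
    (hv : ∀ i, ‖v i‖ ≤ C) :
    ∃ w : E, ∀ g, Tendsto (fun i => inner ℝ g (v i)) l (nhds (inner ℝ g w)) := by
  let d (i : ι) : WeakDual ℝ E := StrongDual.toWeakDual (InnerProductSpace.toDual ℝ E (v i))
  have hball : ∀ i, d i ∈ WeakDual.toStrongDual ⁻¹' Metric.closedBall 0 C := fun i =>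
    mem_closedBall_zero_iff.2 <| ((InnerProductSpace.toDual ℝ E).norm_map (v i)).trans_le (hv i)
  obtain ⟨x, -, hx⟩ := (WeakDual.isCompact_closedBall (𝕜 := ℝ) (E := E) 0 C).ultrafilter_le_nhds
    (l.map d) (le_principal_iff.2 <| mem_map.2 <| univ_mem' hball)
  refine ⟨(InnerProductSpace.toDual ℝ E).symm (WeakDual.toStrongDual x), fun g => ?_⟩
  simp only [real_inner_comm _ g, InnerProductSpace.toDual_symm_apply]
  exact ((WeakDual.eval_continuous g).tendsto x).comp hx

end HilbertSpace

section SetIntegral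

variable {X ι : Type*} [MeasurableSpace X] {μ : Measure X}

theorem inner_indicatorConstLp_one_toLp [IsFiniteMeasure μ] {R : Set X} (hR : MeasurableSet R)
    {f : X → ℝ} (hf : MemLp f 2 μ) :
    inner ℝ (indicatorConstLp 2 hR (measure_ne_top μ R) (1 : ℝ)) hf.toLp = ∫ x in R, f x ∂μ :=
  (L2.inner_indicatorConstLp_one hR _ _).trans <|
    integral_congr_ae (ae_restrict_of_ae hf.coeFn_toLp)

theorem exists_sign_sum_indicator_abs_setIntegral_sub_le [IsProbabilityMeasure μ] [Nonempty ι]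
    {R : ι → Set X} (hR : ∀ j, MeasurableSet (R j)) {f : X → ℝ} (hf : MemLp f 2 μ)
    {ε : ℝ} (hε : 0 < ε) {m : ℕ} (hm : ‖hf.toLp‖ ^ 2 < m * ε ^ 2) :
    ∃ (s : Fin m → SignType) (a : Fin m → ι), ∀ j,
      |∫ x in R j, (f x - ε * ∑ i, (s i : ℝ) * (R (a i)).indicator 1 x) ∂μ| ≤ ε := by
  let k (j : ι) : Lp ℝ 2 μ := indicatorConstLp 2 (hR j) (measure_ne_top μ _) (1 : ℝ)
  have hk : ∀ j, ‖k j‖ ≤ 1 := fun j => norm_indicatorConstLp_le.trans <| by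
    simpa using Real.rpow_le_one measureReal_nonneg measureReal_le_one (by norm_num)
  obtain ⟨s, a, hsa⟩ := exists_sign_sum_abs_inner_sub_le hk hε m hm
  refine ⟨s, a, fun j => ?_⟩
  have hind (i : Fin m) : Integrable ((R (a i)).indicator (1 : X → ℝ)) (μ.restrict (R j)) :=
    (integrable_const 1).indicator (hR _)
  have hinner (i : Fin m) :
      inner ℝ (k j) (k (a i)) = ∫ x in R j, (R (a i)).indicator 1 x ∂μ :=
    inner_indicatorConstLp_one_toLp (hR j) _
  convert hsa j using 2
  rw [integral_sub (hf.integrable one_le_two).integrableOn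
      ((integrable_finsetSum _ fun i _ => (hind i).const_mul _).const_mul ε),
    integral_const_mul, integral_finsetSum _ fun i _ => (hind i).const_mul _]
  simp only [integral_const_mul, inner_sub_right, real_inner_smul_right, inner_sum, hinner, k,
    inner_indicatorConstLp_one_toLp (hR j) hf]

theorem exists_tendsto_setIntegral_of_mem_Icc [IsFiniteMeasure μ] (l : Ultrafilter ι) {a b : ℝ}
    (hab : a ≤ b) {f : ι → X → ℝ} (hf : ∀ i, Measurable (f i)) (hfI : ∀ i x, f i x ∈ Icc a b) :
    ∃ F : X → ℝ, Measurable F ∧ (∀ x, F x ∈ Icc a b) ∧ ∀ s, MeasurableSet s →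
      Tendsto (fun i => ∫ x in s, f i x ∂μ) l (nhds (∫ x in s, F x ∂μ)) := by
  have hbound (i : ι) (x : X) : ‖f i x‖ ≤ max |a| |b| :=
    abs_le_max_abs_abs (hfI i x).1 (hfI i x).2
  have hmem (i : ι) : MemLp (f i) 2 μ :=
    .of_bound (hf i).aestronglyMeasurable _ (ae_of_all _ (hbound i))
  have hint (i : ι) : Integrable (f i) μ := (hmem i).integrable one_le_two
  obtain ⟨w, hw⟩ := exists_tendsto_inner_of_norm_le l fun i =>
    Lp.norm_le_of_ae_bound (f := (hmem i).toLp) ((abs_nonneg a).trans (le_max_left _ |b|)) <| by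
      filter_upwards [(hmem i).coeFn_toLp] with x hx using hx ▸ hbound i x
  have hlim (s : Set X) (hs : MeasurableSet s) :
      Tendsto (fun i => ∫ x in s, f i x ∂μ) l (nhds (∫ x in s, w x ∂μ)) := by
    simpa only [inner_indicatorConstLp_one_toLp hs (hmem _), L2.inner_indicatorConstLp_one] using
      hw (indicatorConstLp 2 hs (measure_ne_top μ s) 1)
  have hwint : Integrable w μ := (Lp.memLp w).integrable one_le_two
  have haw : (fun _ => a) ≤ᵐ[μ] w :=
    ae_le_of_forall_setIntegral_le (integrable_const a) hwint fun s hs _ =>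
      ge_of_tendsto' (hlim s hs) fun i =>
        integral_mono (integrable_const a) (hint i).integrableOn fun x => (hfI i x).1
  have hwb : w ≤ᵐ[μ] fun _ => b :=
    ae_le_of_forall_setIntegral_le hwint (integrable_const b) fun s hs _ =>
      le_of_tendsto' (hlim s hs) fun i =>
        integral_mono (hint i).integrableOn (integrable_const b) fun x => (hfI i x).2
  refine ⟨fun x => max a (min b (w x)),
    measurable_const.max (measurable_const.min (Lp.stronglyMeasurable w).measurable),
    fun x => ⟨le_max_left _ _, max_le hab (min_le_left _ _)⟩, fun s hs => ?_⟩
  have hclamp : w =ᵐ[μ] fun x => max a (min b (w x)) := by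
    filter_upwards [haw, hwb] with x hax hxb
    rw [min_eq_right hxb, max_eq_right hax]
  rw [← integral_congr_ae (ae_restrict_of_ae hclamp)]
  exact hlim s hs

end SetIntegral

section CutNormLE

variable {α β ι : Type*} [MeasurableSpace α] [MeasurableSpace β] {ρ : Measure (α × β)}
  {U V W : α × β → ℝ} {ε δ : ℝ}

/-- `CutNormLE ρ U ε` says that the cut norm of the (uncurried) kernel `U`, taken with respect to
the measure `ρ`, is at most `ε`. Being a predicate, it never meets the junk value of an unbounded
supremum. -/
def CutNormLE (ρ : Measure (α × β)) (U : α × β → ℝ) (ε : ℝ) : Prop :=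
  ∀ ⦃S : Set α⦄ ⦃T : Set β⦄, MeasurableSet S → MeasurableSet T → |∫ p in S ×ˢ T, U p ∂ρ| ≤ ε

namespace CutNormLE

theorem mono (h : CutNormLE ρ U ε) (hεδ : ε ≤ δ) : CutNormLE ρ U δ :=
  fun _ _ hS hT => (h hS hT).trans hεδ

theorem congr_ae (h : CutNormLE ρ U ε) (hUV : U =ᵐ[ρ] V) : CutNormLE ρ V ε := fun _ _ hS hT => by
  rw [← integral_congr_ae (ae_restrict_of_ae hUV)]
  exact h hS hT

theorem sub_self (U : α × β → ℝ) : CutNormLE ρ (U - U) 0 := fun S T _ _ => by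
  simp [integral_zero]

theorem sub_comm (h : CutNormLE ρ (U - V) ε) : CutNormLE ρ (V - U) ε := fun _ _ hS hT => by
  rw [← neg_sub U V]
  simpa only [Pi.neg_apply, integral_neg, abs_neg] using h hS hT

theorem add (hU : Integrable U ρ) (hV : Integrable V ρ) (hUε : CutNormLE ρ U ε)
    (hVδ : CutNormLE ρ V δ) : CutNormLE ρ (U + V) (ε + δ) := fun _ _ hS hT => by
  rw [integral_add' hU.integrableOn hV.integrableOn]
  exact (abs_add_le _ _).trans (add_le_add (hUε hS hT) (hVδ hS hT))

theorem sub_trans (hU : Integrable U ρ) (hV : Integrable V ρ) (hW : Integrable W ρ)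
    (hUV : CutNormLE ρ (U - V) ε) (hVW : CutNormLE ρ (V - W) δ) :
    CutNormLE ρ (U - W) (ε + δ) :=
  sub_add_sub_cancel U V W ▸ add (hU.sub hV) (hV.sub hW) hUV hVW

theorem sub_of_succ {V : ℕ → α × β → ℝ} (hV : ∀ n, Integrable (V n) ρ) {c : ℕ → ℝ}
    (h : ∀ n, CutNormLE ρ (V n - V (n + 1)) (c n - c (n + 1))) {n m : ℕ} (hnm : n ≤ m) :
    CutNormLE ρ (V n - V m) (c n - c m) := by
  induction m, hnm using Nat.le_induction with
  | base => exact (sub_self (V n)).mono (_root_.sub_self (c n)).ge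
  | succ m _ ih =>
    rw [← sub_add_sub_cancel (c n) (c m)]
    exact sub_trans (hV n) (hV m) (hV (m + 1)) ih (h m)

theorem sub_of_tendsto {l : Filter ι} [l.NeBot] {V : ι → α × β → ℝ} (hU : Integrable U ρ)
    (hV : ∀ i, Integrable (V i) ρ) (hW : Integrable W ρ)
    (hlim : ∀ S T, MeasurableSet S → MeasurableSet T →
      Tendsto (fun i => ∫ p in S ×ˢ T, V i p ∂ρ) l (nhds (∫ p in S ×ˢ T, W p ∂ρ)))
    (h : ∀ᶠ i in l, CutNormLE ρ (U - V i) ε) : CutNormLE ρ (U - W) ε := fun S T hS hT => by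
  rw [integral_sub' hU.integrableOn hW.integrableOn]
  refine le_of_tendsto ((hlim S T hS hT).const_sub _).abs (h.mono fun i hi => ?_)
  rw [← integral_sub' hU.integrableOn (hV i).integrableOn]
  exact hi hS hT

theorem of_abs_le_of_eq_zero [IsFiniteMeasure ρ] {C : ℝ} (hC : ∀ p, |U p| ≤ C) {E : Set (α × β)}
    (hE : ∀ p ∉ E, U p = 0) : CutNormLE ρ U (C * ρ.real E) := fun S T hS hT => by
  rw [setIntegral_eq_of_subset_of_forall_sdiff_eq_zero (hS.prod hT) (inter_subset_left (t := E))
    fun p hp => hE p fun hpE => hp.2 ⟨hp.1, hpE⟩]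
  obtain rfl | ⟨p, -⟩ := E.eq_empty_or_nonempty
  · simp
  · calc ‖∫ p in S ×ˢ T ∩ E, U p ∂ρ‖ ≤ C * ρ.real (S ×ˢ T ∩ E) :=
          norm_setIntegral_le_of_norm_le_const (measure_lt_top _ _) fun p _ => hC p
      _ ≤ C * ρ.real E :=
          mul_le_mul_of_nonneg_left (measureReal_mono inter_subset_right)
            ((abs_nonneg (U p)).trans (hC p))

theorem comp_prodMap {Ω Ω' : Type*} [MeasurableSpace Ω] [MeasurableSpace Ω'] {μ : Measure Ω}
    {μ' : Measure Ω'} [SFinite μ] {φ : Ω → Ω'} {ψ : Ω' → Ω}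
    (hφ : MeasurePreserving φ μ μ') (hψ : Measurable ψ) (hψφ : ψ ∘ φ =ᵐ[μ] id)
    {U : Ω' × Ω' → ℝ} (hU : AEStronglyMeasurable U (μ'.prod μ'))
    (h : CutNormLE (μ'.prod μ') U ε) : CutNormLE (μ.prod μ) (U ∘ Prod.map φ φ) ε := by
  intro S T hS hT
  have hpre (A : Set Ω) : φ ⁻¹' (ψ ⁻¹' A) =ᵐ[μ] A :=
    eventuallyEq_set.2 <| hψφ.mono fun x hx => by
      rw [mem_preimage, mem_preimage, show ψ (φ x) = x from hx]
  have hφφ := hφ.prod hφ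
  have htransfer : ∫ p in S ×ˢ T, (U ∘ Prod.map φ φ) p ∂μ.prod μ =
      ∫ p in (ψ ⁻¹' S) ×ˢ (ψ ⁻¹' T), U p ∂μ'.prod μ' := by
    rw [← setIntegral_congr_set (Measure.set_prod_ae_eq (hpre S) (hpre T)), ← hφφ.map_eq,
      setIntegral_map ((hψ hS).prod (hψ hT)) (hφφ.map_eq ▸ hU) hφφ.aemeasurable]
    rfl
  rw [htransfer]
  exact h (hψ hS) (hψ hT)

end CutNormLE

/-- The Frieze–Kannan weak regularity lemma. -/
theorem exists_sign_sum_rectangle_cutNormLE [IsProbabilityMeasure ρ] (hW : Measurable W)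
    (hW1 : ∀ p, |W p| ≤ 1) (hε : 0 < ε) {m : ℕ} (hm : 1 < m * ε ^ 2) :
    ∃ (s : Fin m → SignType) (S : Fin m → Set α) (T : Fin m → Set β),
      (∀ i, MeasurableSet (S i)) ∧ (∀ i, MeasurableSet (T i)) ∧
      CutNormLE ρ (fun p => W p - ε * ∑ i, (s i : ℝ) * (S i ×ˢ T i).indicator 1 p) ε := by
  have hmem : MemLp W 2 ρ := .of_bound hW.aestronglyMeasurable 1 (ae_of_all _ hW1)
  have hnorm : ‖hmem.toLp‖ ≤ 1 :=
    (Lp.norm_le_of_ae_bound zero_le_one <| by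
      filter_upwards [hmem.coeFn_toLp] with p hp using hp ▸ hW1 p).trans <| by
    simp [measureUnivNNReal]
  obtain ⟨s, a, hsa⟩ := exists_sign_sum_indicator_abs_setIntegral_sub_le
    (R := fun r : {S : Set α // MeasurableSet S} × {T : Set β // MeasurableSet T} =>
      (r.1 : Set α) ×ˢ (r.2 : Set β))
    (fun r => r.1.2.prod r.2.2) hmem hε ((pow_le_one₀ (norm_nonneg _) hnorm).trans_lt hm)
  exact ⟨s, fun i => (a i).1, fun i => (a i).2, fun i => (a i).1.2, fun i => (a i).2.2,
    fun S T hS hT => hsa (⟨S, hS⟩, ⟨T, hT⟩)⟩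

end CutNormLE

section StepKernel

variable {Ω κ : Type*} [MeasurableSpace Ω] {μ : Measure Ω} [IsProbabilityMeasure μ]

theorem cutNormLE_step_sub_step {H : κ → κ → ℝ} {B : ℝ} (hB : ∀ u v, |H u v| ≤ B)
    (c c' : Ω → κ) :
    CutNormLE (μ.prod μ) ((fun p => H (c p.1) (c p.2)) - fun p => H (c' p.1) (c' p.2))
      (2 * B * (2 * μ.real {x | c x ≠ c' x})) := by
  set D : Set Ω := {x | c x ≠ c' x}
  have hdiff (p : Ω × Ω) : |H (c p.1) (c p.2) - H (c' p.1) (c' p.2)| ≤ 2 * B :=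
    (abs_sub _ _).trans <| by linarith [hB (c p.1) (c p.2), hB (c' p.1) (c' p.2)]
  have hzero : ∀ p ∉ D ×ˢ univ ∪ univ ×ˢ D, H (c p.1) (c p.2) - H (c' p.1) (c' p.2) = 0 := by
    rintro ⟨x, y⟩ hp
    simp only [mem_union, mem_prod, mem_univ, and_true, true_and, not_or, D, mem_ofPred_eq,
      not_not] at hp
    rw [hp.1, hp.2, sub_self]
  have hD : (μ.prod μ).real (D ×ˢ univ ∪ univ ×ˢ D) ≤ 2 * μ.real D :=
    (measureReal_union_le _ _).trans_eq <| by simp [measureReal_prod_prod, two_mul]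
  obtain ⟨x⟩ := nonempty_of_isProbabilityMeasure μ
  exact (CutNormLE.of_abs_le_of_eq_zero hdiff hzero).mono <|
    mul_le_mul_of_nonneg_left hD ((abs_nonneg _).trans (hdiff (x, x)))

open scoped Classical in
/-- The value `ε * ∑ i, s i * 1_{S i × T i} (x, y)` of a signed sum of rectangles, as a function of
the codes `u = fun i => (x ∈ S i, x ∈ T i)` and `v = fun i => (y ∈ S i, y ∈ T i)` of the two
points. Remembering only the codes leaves finitely many step kernels up to the choice of a
measurable map into a finite type. -/
noncomputable def signedRectangleSum (ε : ℝ) {m : ℕ} (s : Fin m → SignType)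
    (u v : Fin m → Prop × Prop) : ℝ :=
  ε * ∑ i, (s i : ℝ) * if (u i).1 ∧ (v i).2 then 1 else 0

theorem abs_signedRectangleSum_le (ε : ℝ) {m : ℕ} (s : Fin m → SignType)
    (u v : Fin m → Prop × Prop) : |signedRectangleSum ε s u v| ≤ |ε| * m := by
  rw [signedRectangleSum, abs_mul]
  gcongr
  refine (Finset.abs_sum_le_sum_abs _ _).trans <|
    (Finset.sum_le_card_nsmul _ _ 1 fun i _ => ?_).trans_eq (by simp)
  have hsign : |(s i : ℝ)| ≤ 1 := by cases s i <;> norm_num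
  split_ifs <;> simp [hsign]

theorem integrable_signedRectangleSum (ε : ℝ) {m : ℕ} (s : Fin m → SignType)
    {c : Ω → Fin m → Prop × Prop} (hc : Measurable c) :
    Integrable (fun p => signedRectangleSum ε s (c p.1) (c p.2)) (μ.prod μ) := by
  have hmeas : Measurable fun p : Ω × Ω => signedRectangleSum ε s (c p.1) (c p.2) :=
    (measurable_of_countable fun q : (Fin m → Prop × Prop) × (Fin m → Prop × Prop) =>
      signedRectangleSum ε s q.1 q.2).comp (hc.prodMap hc)
  exact .of_bound hmeas.aestronglyMeasurable _
    (ae_of_all _ fun p => abs_signedRectangleSum_le ε s (c p.1) (c p.2))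

theorem exists_signedRectangleSum_cutNormLE {W : Ω × Ω → ℝ} (hW : Measurable W)
    (hW1 : ∀ p, |W p| ≤ 1) {ε : ℝ} (hε : 0 < ε) {m : ℕ} (hm : 1 < m * ε ^ 2) :
    ∃ (s : Fin m → SignType) (c : Ω → Fin m → Prop × Prop), Measurable c ∧
      CutNormLE (μ.prod μ) (W - fun p => signedRectangleSum ε s (c p.1) (c p.2)) ε := by
  obtain ⟨s, S, T, hS, hT, hsST⟩ :=
    exists_sign_sum_rectangle_cutNormLE (ρ := μ.prod μ) hW hW1 hε hm
  refine ⟨s, fun x i => (x ∈ S i, x ∈ T i),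
    measurable_pi_lambda _ fun i => (hS i).mem.prodMk (hT i).mem, ?_⟩
  classical
  convert hsST using 2 with p
  simp only [Pi.sub_apply, signedRectangleSum, indicator_apply, mem_prod, Pi.one_apply]

end StepKernel

section CutDistance

variable {U V W : ℝ × ℝ → ℝ} {ε δ : ℝ}

instance inst_s1 : IsProbabilityMeasure μ01 := ⟨by simp [μ01]⟩

theorem setIntegral_prod_μ01 {U : ℝ → ℝ → ℝ}
    (hU : Integrable (Function.uncurry U) (μ01.prod μ01)) {S T : Set ℝ} (hS : MeasurableSet S)
    (hT : MeasurableSet T) :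
    ∫ p in S ×ˢ T, Function.uncurry U p ∂(μ01.prod μ01) =
      ∫ x in S ∩ Icc 0 1, ∫ y in T ∩ Icc 0 1, U x y := by
  rw [setIntegral_prod _ hU.integrableOn, Measure.restrict_restrict hS,
    Measure.restrict_restrict hT]
  rfl

theorem cutNorm_le_iff {U : ℝ → ℝ → ℝ} (hU : Integrable (Function.uncurry U) (μ01.prod μ01)) :
    cutNorm U ≤ ε ↔ CutNormLE (μ01.prod μ01) (Function.uncurry U) ε := by
  constructor
  · intro h S T hS hT
    have hbdd : BddAbove {r : ℝ | ∃ S T : Set ℝ, MeasurableSet S ∧ MeasurableSet T ∧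
        S ⊆ Icc 0 1 ∧ T ⊆ Icc 0 1 ∧ r = |∫ x in S, ∫ y in T, U x y|} := by
      refine ⟨∫ p, |Function.uncurry U p| ∂(μ01.prod μ01), ?_⟩
      rintro _ ⟨S, T, hS, hT, hS1, hT1, rfl⟩
      rw [← inter_eq_left.2 hS1, ← inter_eq_left.2 hT1, ← setIntegral_prod_μ01 hU hS hT]
      exact abs_integral_le_integral_abs.trans <|
        setIntegral_le_integral hU.abs (ae_of_all _ fun _ => abs_nonneg _)
    calc |∫ p in S ×ˢ T, Function.uncurry U p ∂(μ01.prod μ01)|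
        = |∫ x in S ∩ Icc 0 1, ∫ y in T ∩ Icc 0 1, U x y| := by
          rw [setIntegral_prod_μ01 hU hS hT]
      _ ≤ cutNorm U := le_csSup hbdd ⟨_, _, hS.inter measurableSet_Icc,
          hT.inter measurableSet_Icc, inter_subset_right, inter_subset_right, rfl⟩
      _ ≤ ε := h
  · refine fun h => csSup_le ⟨_, ∅, ∅, .empty, .empty, empty_subset _, empty_subset _, rfl⟩ ?_
    rintro _ ⟨S, T, hS, hT, hS1, hT1, rfl⟩
    rw [← inter_eq_left.2 hS1, ← inter_eq_left.2 hT1, ← setIntegral_prod_μ01 hU hS hT]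
    exact h hS hT

theorem cutNorm_nonneg (U : ℝ → ℝ → ℝ) : 0 ≤ cutNorm U :=
  Real.sSup_nonneg (by rintro _ ⟨S, T, -, -, -, -, rfl⟩; exact abs_nonneg _)

theorem cutDist_nonneg (U V : ℝ → ℝ → ℝ) : 0 ≤ cutDist U V :=
  Real.sInf_nonneg (by rintro _ ⟨φ, -, rfl⟩; exact cutNorm_nonneg _)

namespace IsInvMeasurePreserving

theorem id : IsInvMeasurePreserving id :=
  ⟨mapsTo_id _, .id _, _root_.id, mapsTo_id _, .id _, fun _ _ => rfl, fun _ _ => rfl⟩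

theorem comp {φ χ : ℝ → ℝ} (hφ : IsInvMeasurePreserving φ) (hχ : IsInvMeasurePreserving χ) :
    IsInvMeasurePreserving (φ ∘ χ) := by
  obtain ⟨hφI, hφm, φ', hφI', hφm', hφl, hφr⟩ := hφ
  obtain ⟨hχI, hχm, χ', hχI', hχm', hχl, hχr⟩ := hχ
  refine ⟨hφI.comp hχI, hφm.comp hχm, χ' ∘ φ', hχI'.comp hφI', hχm'.comp hφm', fun x hx => ?_,
    fun x hx => ?_⟩
  · rw [Function.comp_apply, Function.comp_apply, hφl _ (hχI hx), hχl x hx]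
  · rw [Function.comp_apply, Function.comp_apply, hχr _ (hφI' hx), hφr x hx]

theorem exists_ae_inverse {φ : ℝ → ℝ} (hφ : IsInvMeasurePreserving φ) :
    ∃ ψ, IsInvMeasurePreserving ψ ∧ ψ ∘ φ =ᵐ[μ01] _root_.id ∧ φ ∘ ψ =ᵐ[μ01] _root_.id := by
  obtain ⟨hI, hm, ψ, hI', hm', hl, hr⟩ := hφ
  exact ⟨ψ, ⟨hI', hm', φ, hI, hm, hr, hl⟩, ae_restrict_of_forall_mem measurableSet_Icc hl,
    ae_restrict_of_forall_mem measurableSet_Icc hr⟩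

theorem integrable_comp {φ : ℝ → ℝ} (hφ : IsInvMeasurePreserving φ)
    (hU : Integrable U (μ01.prod μ01)) : Integrable (U ∘ Prod.map φ φ) (μ01.prod μ01) :=
  (hφ.2.1.prod hφ.2.1).integrable_comp_of_integrable hU

theorem cutNormLE_comp {φ : ℝ → ℝ} (hφ : IsInvMeasurePreserving φ)
    (hU : Integrable U (μ01.prod μ01)) (h : CutNormLE (μ01.prod μ01) U ε) :
    CutNormLE (μ01.prod μ01) (U ∘ Prod.map φ φ) ε := by
  obtain ⟨ψ, hψ, hψφ, -⟩ := hφ.exists_ae_inverse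
  exact h.comp_prodMap hφ.2.1 hψ.2.1.measurable hψφ hU.aestronglyMeasurable

end IsInvMeasurePreserving

/-- `CutClose ε U V` says that some invertible measure-preserving map of `[0,1]` brings `V` within
cut norm `ε` of `U`. It follows from `cutDist U V < ε` and implies `cutDist U V ≤ ε`. -/
def CutClose (ε : ℝ) (U V : ℝ × ℝ → ℝ) : Prop :=
  ∃ φ, IsInvMeasurePreserving φ ∧ CutNormLE (μ01.prod μ01) (U - V ∘ Prod.map φ φ) ε

namespace CutClose

theorem of_cutNormLE (h : CutNormLE (μ01.prod μ01) (U - V) ε) : CutClose ε U V :=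
  ⟨id, .id, h⟩

theorem symm (hU : Integrable U (μ01.prod μ01)) (hV : Integrable V (μ01.prod μ01))
    (h : CutClose ε U V) : CutClose ε V U := by
  obtain ⟨φ, hφ, hUV⟩ := h
  obtain ⟨ψ, hψ, -, hφψ⟩ := hφ.exists_ae_inverse
  refine ⟨ψ, hψ, ((hψ.cutNormLE_comp (hU.sub (hφ.integrable_comp hV)) hUV).congr_ae ?_).sub_comm⟩
  filter_upwards [Measure.quasiMeasurePreserving_fst.ae hφψ,
    Measure.quasiMeasurePreserving_snd.ae hφψ] with p hp₁ hp₂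
  exact congrArg (fun q => U (Prod.map ψ ψ p) - V q) (Prod.ext hp₁ hp₂)

theorem trans (hU : Integrable U (μ01.prod μ01)) (hV : Integrable V (μ01.prod μ01))
    (hW : Integrable W (μ01.prod μ01)) (hUV : CutClose ε U V) (hVW : CutClose δ V W) :
    CutClose (ε + δ) U W := by
  obtain ⟨φ, hφ, hUVφ⟩ := hUV
  obtain ⟨χ, hχ, hVWχ⟩ := hVW
  have hWχ := hχ.integrable_comp hW
  exact ⟨χ ∘ φ, hχ.comp hφ, hUVφ.sub_trans hU (hφ.integrable_comp hV) (hφ.integrable_comp hWχ)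
    (hφ.cutNormLE_comp (hV.sub hWχ) hVWχ)⟩

end CutClose

theorem IsInvMeasurePreserving.cutNorm_sub_le_iff {φ : ℝ → ℝ} (hφ : IsInvMeasurePreserving φ)
    {U V : ℝ → ℝ → ℝ} (hU : Integrable (Function.uncurry U) (μ01.prod μ01))
    (hV : Integrable (Function.uncurry V) (μ01.prod μ01)) :
    cutNorm (fun x y => U x y - V (φ x) (φ y)) ≤ ε ↔
      CutNormLE (μ01.prod μ01) (Function.uncurry U - Function.uncurry V ∘ Prod.map φ φ) ε :=
  cutNorm_le_iff (U := fun x y => U x y - V (φ x) (φ y)) (hU.sub (hφ.integrable_comp hV))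

theorem CutClose.cutDist_le {U V : ℝ → ℝ → ℝ}
    (hU : Integrable (Function.uncurry U) (μ01.prod μ01))
    (hV : Integrable (Function.uncurry V) (μ01.prod μ01))
    (h : CutClose ε (Function.uncurry U) (Function.uncurry V)) : cutDist U V ≤ ε := by
  obtain ⟨φ, hφ, hUV⟩ := h
  calc cutDist U V ≤ cutNorm fun x y => U x y - V (φ x) (φ y) :=
        csInf_le ⟨0, by rintro _ ⟨φ, -, rfl⟩; exact cutNorm_nonneg _⟩ ⟨φ, hφ, rfl⟩
    _ ≤ ε := (hφ.cutNorm_sub_le_iff hU hV).2 hUV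

theorem CutClose.of_cutDist_lt {U V : ℝ → ℝ → ℝ}
    (hU : Integrable (Function.uncurry U) (μ01.prod μ01))
    (hV : Integrable (Function.uncurry V) (μ01.prod μ01))
    (h : cutDist U V < ε) : CutClose ε (Function.uncurry U) (Function.uncurry V) := by
  obtain ⟨_, ⟨φ, hφ, rfl⟩, hlt⟩ := exists_lt_of_csInf_lt (by exact ⟨_, id, .id, rfl⟩) h
  exact ⟨φ, hφ, (hφ.cutNorm_sub_le_iff hU hV).1 hlt.le⟩

end CutDistance

section Rearrangement

theorem measure_eq_tsum_inter_preimage_singleton {X κ : Type*} [MeasurableSpace X]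
    [MeasurableSpace κ] [MeasurableSingletonClass κ] [Countable κ] (μ : Measure X) {q : X → κ}
    (hq : Measurable q) {A : Set X} (hA : MeasurableSet A) :
    μ A = ∑' k, μ (A ∩ q ⁻¹' {k}) := by
  rw [← measure_iUnion, ← inter_iUnion, ← preimage_iUnion, iUnion_of_singleton, preimage_univ,
    inter_univ]
  · exact fun i j hij => Disjoint.inter_left' _ <| Disjoint.inter_right' _ <|
      Disjoint.preimage q (disjoint_singleton.2 hij)
  · exact fun k => hA.inter (hq (measurableSet_singleton k))

theorem measurePreserving_of_fiberwise {X Y κ κ' : Type*} [MeasurableSpace X] [MeasurableSpace Y]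
    [MeasurableSpace κ] [MeasurableSingletonClass κ] [Countable κ] [MeasurableSpace κ']
    [MeasurableSingletonClass κ'] [Countable κ'] {μ : Measure X} {ν : Measure Y} {q : X → κ}
    (hq : Measurable q) {r : Y → κ'} (hr : Measurable r) (τ : κ ≃ κ') {g : κ → X → Y}
    (hg : ∀ k, MeasurePreserving (g k) μ ν) (hqr : ∀ k x, r (g k x) = τ k ↔ q x = k) :
    MeasurePreserving (fun x => g (q x) x) μ ν := by
  have hmeas : Measurable fun x => g (q x) x :=
    (measurable_from_prod_countable_right (f := fun p : κ × X => g p.1 p.2)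
      fun k => (hg k).measurable).comp (hq.prodMk measurable_id)
  refine ⟨hmeas, Measure.ext fun S hS => ?_⟩
  have hfiber (k : κ) : (fun x => g (q x) x) ⁻¹' S ∩ q ⁻¹' {k} = g k ⁻¹' (S ∩ r ⁻¹' {τ k}) := by
    ext x
    simp only [mem_inter_iff, mem_preimage, mem_singleton_iff, hqr]
    exact and_congr_left fun h => h ▸ Iff.rfl
  rw [Measure.map_apply hmeas hS, measure_eq_tsum_inter_preimage_singleton μ hq (hmeas hS),
    measure_eq_tsum_inter_preimage_singleton ν hr hS,
    ← τ.tsum_eq fun k => ν (S ∩ r ⁻¹' {k})]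
  exact tsum_congr fun k => by
    rw [hfiber, (hg k).measure_preimage
      (hS.inter (hr (measurableSet_singleton _))).nullMeasurableSet]

theorem measurable_floor_natCast_mul (N : ℕ) : Measurable fun x : ℝ => ⌊(N : ℝ) * x⌋ :=
  Int.measurable_floor.comp (measurable_const_mul _)

/-- The permutation of the line which translates each cell `[k / N, (k + 1) / N)` onto the cell
`[τ k / N, (τ k + 1) / N)`. -/
noncomputable def cellPerm (N : ℕ) (τ : Equiv.Perm ℤ) (x : ℝ) : ℝ :=
  x + ((τ ⌊(N : ℝ) * x⌋ - ⌊(N : ℝ) * x⌋ : ℤ) : ℝ) / N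

theorem floor_mul_add_intCast_div {N : ℕ} (hN : 0 < N) (x : ℝ) (j : ℤ) :
    ⌊(N : ℝ) * (x + j / N)⌋ = ⌊(N : ℝ) * x⌋ + j := by
  have hN' : (N : ℝ) ≠ 0 := by positivity
  rw [mul_add, mul_div_cancel₀ _ hN', Int.floor_add_intCast]

theorem floor_mul_cellPerm {N : ℕ} (hN : 0 < N) (τ : Equiv.Perm ℤ) (x : ℝ) :
    ⌊(N : ℝ) * cellPerm N τ x⌋ = τ ⌊(N : ℝ) * x⌋ := by
  rw [cellPerm, floor_mul_add_intCast_div hN, add_sub_cancel]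

theorem cellPerm_symm_cellPerm {N : ℕ} (hN : 0 < N) (τ : Equiv.Perm ℤ) (x : ℝ) :
    cellPerm N τ.symm (cellPerm N τ x) = x := by
  rw [cellPerm, floor_mul_cellPerm hN, Equiv.symm_apply_apply, cellPerm]
  push_cast
  ring

theorem measurePreserving_cellPerm {N : ℕ} (hN : 0 < N) (τ : Equiv.Perm ℤ) :
    MeasurePreserving (cellPerm N τ) := by
  refine measurePreserving_of_fiberwise (measurable_floor_natCast_mul N)
    (measurable_floor_natCast_mul N) τ (g := fun k x => x + ((τ k - k : ℤ) : ℝ) / N)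
    (fun k => measurePreserving_add_right volume _) fun k x => ?_
  rw [floor_mul_add_intCast_div hN]
  omega

theorem floor_mul_mem_Ico_iff {N : ℕ} (hN : 0 < N) {x : ℝ} :
    ⌊(N : ℝ) * x⌋ ∈ Ico (0 : ℤ) N ↔ x ∈ Ico (0 : ℝ) 1 := by
  have hN' : (0 : ℝ) < N := by exact_mod_cast hN
  rw [mem_Ico, mem_Ico, Int.floor_nonneg, Int.floor_lt, Int.cast_natCast,
    mul_nonneg_iff_of_pos_left hN', mul_lt_iff_lt_one_right hN']

theorem mapsTo_cellPerm {N : ℕ} (hN : 0 < N) {τ : Equiv.Perm ℤ}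
    (hτ : ∀ k ∉ Ico (0 : ℤ) N, τ k = k) : MapsTo (cellPerm N τ) (Icc 0 1) (Icc 0 1) := by
  intro x hx
  by_cases h : ⌊(N : ℝ) * x⌋ ∈ Ico (0 : ℤ) N
  · have hτh : τ ⌊(N : ℝ) * x⌋ ∈ Ico (0 : ℤ) N :=
      by_contra fun hout => hout ((τ.injective (hτ _ hout)).symm ▸ h)
    rw [← floor_mul_cellPerm hN, floor_mul_mem_Ico_iff hN] at hτh
    exact Ico_subset_Icc_self hτh
  · rw [cellPerm, hτ _ h]
    simpa using hx

theorem IsInvMeasurePreserving.of_measurePreserving {φ ψ : ℝ → ℝ} (hφ : MeasurePreserving φ)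
    (hψ : MeasurePreserving ψ) (hφI : MapsTo φ (Icc 0 1) (Icc 0 1))
    (hψI : MapsTo ψ (Icc 0 1) (Icc 0 1)) (hψφ : Function.LeftInverse ψ φ)
    (hφψ : Function.LeftInverse φ ψ) : IsInvMeasurePreserving φ := by
  have hφpre : φ ⁻¹' Icc 0 1 = Icc 0 1 :=
    Subset.antisymm (fun x hx => hψφ x ▸ hψI hx) hφI
  have hψpre : ψ ⁻¹' Icc 0 1 = Icc 0 1 :=
    Subset.antisymm (fun x hx => hφψ x ▸ hφI hx) hψI
  refine ⟨hφI, ?_, ψ, hψI, ?_, fun x _ => hψφ x, fun x _ => hφψ x⟩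
  · simpa only [hφpre] using hφ.restrict_preimage (measurableSet_Icc (a := 0) (b := 1))
  · simpa only [hψpre] using hψ.restrict_preimage (measurableSet_Icc (a := 0) (b := 1))

theorem isInvMeasurePreserving_cellPerm {N : ℕ} (hN : 0 < N) {τ : Equiv.Perm ℤ}
    (hτ : ∀ k ∉ Ico (0 : ℤ) N, τ k = k) : IsInvMeasurePreserving (cellPerm N τ) := by
  have hτ' : ∀ k ∉ Ico (0 : ℤ) N, τ.symm k = k := fun k hk => by
    rw [Equiv.symm_apply_eq, hτ k hk]
  exact .of_measurePreserving (measurePreserving_cellPerm hN τ)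
    (measurePreserving_cellPerm hN τ.symm) (mapsTo_cellPerm hN hτ) (mapsTo_cellPerm hN hτ')
    (cellPerm_symm_cellPerm hN τ) (cellPerm_symm_cellPerm hN τ.symm)

theorem abs_floor_mul_div_sub_lt {N : ℕ} (hN : 0 < N) (x : ℝ) :
    |(⌊(N : ℝ) * x⌋ : ℝ) / N - x| < 1 / N := by
  have hN' : (0 : ℝ) < N := by exact_mod_cast hN
  rw [abs_lt, lt_sub_iff_add_lt, sub_lt_iff_lt_add, lt_div_iff₀ hN', div_lt_iff₀ hN']
  field_simp
  constructor <;> linarith [Int.floor_le (N * x), Int.lt_floor_add_one (N * x)]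

theorem exists_perm_monotoneOn_Ico {κ : Type*} [LinearOrder κ] (d : ℤ → κ) (N : ℕ) :
    ∃ τ : Equiv.Perm ℤ, (∀ k ∉ Ico (0 : ℤ) N, τ k = k) ∧ MonotoneOn (d ∘ τ) (Ico (0 : ℤ) N) := by
  let cells : Fin N ≃ {k : ℤ // k ∈ Ico (0 : ℤ) N} :=
    { toFun := fun j => ⟨j, by simp, by simp⟩
      invFun := fun k => ⟨k.1.toNat, by have := k.2.1; have := k.2.2; omega⟩
      left_inv := fun j => by simp
      right_inv := fun k => by simpa [Subtype.ext_iff] using k.2.1 }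
  classical
  let σ := Tuple.sort fun j : Fin N => d j
  have hσ : Monotone fun j => d (σ j) := Tuple.monotone_sort fun j : Fin N => d j
  refine ⟨σ.extendDomain cells, fun k hk => σ.extendDomain_apply_not_subtype cells hk,
    fun i hi j hj hij => ?_⟩
  simp only [Function.comp_apply]
  rw [σ.extendDomain_apply_subtype cells hi, σ.extendDomain_apply_subtype cells hj]
  exact hσ (Int.toNat_le_toNat hij)

/-- Embed `κ` in the integers, approximate the resulting function by a uniformly continuous one and
round its values on a fine grid. -/
theorem exists_floor_code_approx {κ : Type*} [Finite κ] [MeasurableSpace κ]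
    [MeasurableSingletonClass κ] (μ : Measure ℝ) [IsFiniteMeasure μ] {c : ℝ → κ}
    (hc : Measurable c) {δ : ℝ} (hδ : 0 < δ) :
    ∃ N : ℕ, 0 < N ∧ ∃ d : ℤ → κ, μ.real {x | c x ≠ d ⌊(N : ℝ) * x⌋} ≤ δ := by
  have : Nonempty κ := ⟨c 0⟩
  obtain ⟨e, he⟩ := exists_injective_nat κ
  obtain ⟨B, hB⟩ := Finite.exists_le e
  have hint : Integrable (fun x => (e (c x) : ℝ)) μ :=
    .of_bound ((measurable_of_countable fun a => (e a : ℝ)).comp hc).aestronglyMeasurable B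
      (ae_of_all _ fun x => by simpa using hB (c x))
  obtain ⟨g, hgsupp, hg, hgcont, hgint⟩ :=
    hint.exists_hasCompactSupport_integral_sub_le (ε := 1 / 4 * δ) (by positivity)
  obtain ⟨η, hη, hgη⟩ := Metric.uniformContinuous_iff.1
    (hgsupp.uniformContinuous_of_continuous hgcont) (1 / 4) (by norm_num)
  obtain ⟨n, hn⟩ := exists_nat_one_div_lt hη
  let d (k : ℤ) : κ := Function.invFun (fun a => (e a : ℤ)) (round (g (k / ((n + 1 : ℕ) : ℝ))))
  have hd {x : ℝ} (hx : |e (c x) - g x| < 1 / 4) : d ⌊((n + 1 : ℕ) : ℝ) * x⌋ = c x := by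
    set y : ℝ := ⌊((n + 1 : ℕ) : ℝ) * x⌋ / ((n + 1 : ℕ) : ℝ)
    have hyx : dist y x < η :=
      (abs_floor_mul_div_sub_lt n.succ_pos x).trans (by exact_mod_cast hn)
    have hround : round (g y) = e (c x) := by
      have hgy := abs_lt.1 (hgη hyx)
      have hgx := abs_lt.1 hx
      rw [round_eq_iff, Int.cast_natCast]
      constructor <;> linarith
    exact (congrArg _ hround).trans <|
      Function.leftInverse_invFun (Nat.cast_injective.comp he) (c x)
  refine ⟨n + 1, n.succ_pos, d, ?_⟩
  have hsub : {x | c x ≠ d ⌊((n + 1 : ℕ) : ℝ) * x⌋} ⊆ {x | 1 / 4 ≤ ‖e (c x) - g x‖} :=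
    fun x hx => not_lt.1 fun h => hx (hd h).symm
  have hMarkov := mul_meas_ge_le_integral_of_nonneg
    (ae_of_all μ fun x => norm_nonneg (e (c x) - g x)) (hint.sub hgint).norm (1 / 4)
  linarith [measureReal_mono hsub (measure_ne_top μ _)]

theorem exists_monotoneOn_rearrangement {κ : Type*} [LinearOrder κ] [Finite κ] [MeasurableSpace κ]
    [MeasurableSingletonClass κ] {c : ℝ → κ} (hc : Measurable c) {δ : ℝ} (hδ : 0 < δ) :
    ∃ φ, IsInvMeasurePreserving φ ∧ ∃ e : ℝ → κ, MonotoneOn e (Ico 0 1) ∧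
      μ01.real {x | c (φ x) ≠ e x} ≤ δ := by
  obtain ⟨N, hN, d, hd⟩ := exists_floor_code_approx μ01 hc hδ
  obtain ⟨τ, hτ, hmono⟩ := exists_perm_monotoneOn_Ico d N
  have hφ := isInvMeasurePreserving_cellPerm hN hτ
  refine ⟨_, hφ, fun x => d (τ ⌊(N : ℝ) * x⌋), fun x hx y hy hxy => ?_, ?_⟩
  · exact hmono ((floor_mul_mem_Ico_iff hN).2 hx) ((floor_mul_mem_Ico_iff hN).2 hy) (by gcongr)
  · have hmeas : MeasurableSet {x | c x ≠ d ⌊(N : ℝ) * x⌋} :=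
      (measurableSet_eq_fun hc
        ((measurable_of_countable d).comp (measurable_floor_natCast_mul N))).compl
    rw [← hφ.2.1.measureReal_preimage hmeas.nullMeasurableSet] at hd
    simpa only [preimage_ofPred_eq, floor_mul_cellPerm hN] using hd

theorem natFloor_mul_div_le (M : ℕ) {x : ℝ} (hx : 0 ≤ x) : (⌊(M : ℝ) * x⌋₊ : ℝ) / M ≤ x :=
  div_le_of_le_mul₀ M.cast_nonneg hx <| (Nat.floor_le (by positivity)).trans_eq (mul_comm _ _)

/-- On the next cell the rounded value is already larger than `a`, so the exceptional set lies in
a single cell. -/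
theorem measureReal_monotoneOn_ne_natFloor_fiber_le {κ : Type*} [LinearOrder κ] {e : ℝ → κ}
    (he : MonotoneOn e (Ico 0 1)) {M : ℕ} (hM : 0 < M) (a : κ) :
    μ01.real {x ∈ Ico (0 : ℝ) 1 | e (⌊(M : ℝ) * x⌋₊ / M) = a ∧ e x ≠ a} ≤ 1 / M := by
  have hM' : (0 : ℝ) < M := by exact_mod_cast hM
  set E := {x ∈ Ico (0 : ℝ) 1 | e (⌊(M : ℝ) * x⌋₊ / M) = a ∧ e x ≠ a}
  have hround {x : ℝ} (hx : x ∈ Ico (0 : ℝ) 1) : (⌊(M : ℝ) * x⌋₊ : ℝ) / M ∈ Ico (0 : ℝ) 1 :=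
    ⟨by positivity, (natFloor_mul_div_le M hx.1).trans_lt hx.2⟩
  have hlt {x : ℝ} (hx : x ∈ E) : a < e x :=
    lt_of_le_of_ne (hx.2.1 ▸ he (hround hx.1) hx.1 (natFloor_mul_div_le M hx.1.1)) hx.2.2.symm
  have hcell {x y : ℝ} (hx : x ∈ E) (hy : y ∈ E) : ⌊(M : ℝ) * y⌋₊ ≤ ⌊(M : ℝ) * x⌋₊ := by
    by_contra! hxy
    have hxle : x ≤ (⌊(M : ℝ) * y⌋₊ : ℝ) / M := by
      rw [le_div_iff₀' hM']
      exact ((Nat.floor_lt (by have := hx.1.1; positivity)).1 hxy).le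
    exact (hlt hx).not_ge (hy.2.1 ▸ he hx.1 (hround hy.1) hxle)
  obtain hE | ⟨y, hy⟩ := E.eq_empty_or_nonempty
  · simp [hE]
  set k := ⌊(M : ℝ) * y⌋₊
  have hsub : E ⊆ Ico ((k : ℝ) / M) ((k + 1) / M) := fun x hx => by
    have hMx : 0 ≤ (M : ℝ) * x := mul_nonneg hM'.le hx.1.1
    rw [mem_Ico, div_le_iff₀' hM', lt_div_iff₀' hM', ← Nat.floor_eq_iff hMx]
    exact le_antisymm (hcell hy hx) (hcell hx hy)
  calc μ01.real E ≤ volume.real (Ico ((k : ℝ) / M) ((k + 1) / M)) :=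
        ENNReal.toReal_mono measure_Ico_lt_top.ne
          ((Measure.restrict_apply_le _ _).trans (measure_mono hsub))
    _ = 1 / M := by
        rw [Real.volume_real_Ico_of_le (by gcongr; linarith)]
        ring

theorem measureReal_monotoneOn_ne_natFloor_le {κ : Type*} [LinearOrder κ] [Finite κ] {e : ℝ → κ}
    (he : MonotoneOn e (Ico 0 1)) {M : ℕ} (hM : 0 < M) :
    μ01.real {x ∈ Ico (0 : ℝ) 1 | e x ≠ e (⌊(M : ℝ) * x⌋₊ / M)} ≤ Nat.card κ / M := by
  have := Fintype.ofFinite κ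
  calc μ01.real {x ∈ Ico (0 : ℝ) 1 | e x ≠ e (⌊(M : ℝ) * x⌋₊ / M)}
      ≤ μ01.real (⋃ a, {x ∈ Ico (0 : ℝ) 1 | e (⌊(M : ℝ) * x⌋₊ / M) = a ∧ e x ≠ a}) :=
        measureReal_mono fun x hx => mem_iUnion.2 ⟨_, hx.1, rfl, hx.2⟩
    _ ≤ ∑ a, μ01.real {x ∈ Ico (0 : ℝ) 1 | e (⌊(M : ℝ) * x⌋₊ / M) = a ∧ e x ≠ a} :=
        measureReal_iUnion_fintype_le _
    _ ≤ ∑ _ : κ, 1 / (M : ℝ) :=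
        Finset.sum_le_sum fun a _ => measureReal_monotoneOn_ne_natFloor_fiber_le he hM a
    _ = Nat.card κ / M := by
        rw [Finset.sum_const, Finset.card_univ, Nat.card_eq_fintype_card, nsmul_eq_mul, mul_one_div]

/-- The function which is constantly `g j` on the cell `[j / M, (j + 1) / M)` of `[0, 1)`. Outside
of `[0, 1)` the value is irrelevant; reducing the index of the cell modulo `M` keeps it defined. -/
noncomputable def cellStep {κ : Type*} (M : ℕ) [NeZero M] (g : Fin M → κ) (x : ℝ) : κ :=
  g (Fin.ofNat M ⌊(M : ℝ) * x⌋₊)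

theorem measurable_cellStep {κ : Type*} [MeasurableSpace κ] (M : ℕ) [NeZero M] (g : Fin M → κ) :
    Measurable (cellStep M g) :=
  (measurable_of_countable fun k => g (Fin.ofNat M k)).comp
    (Nat.measurable_floor.comp (measurable_const_mul _))

theorem cellStep_of_mem_Ico {κ : Type*} {M : ℕ} [NeZero M] (e : ℝ → κ) {x : ℝ}
    (hx : x ∈ Ico (0 : ℝ) 1) :
    cellStep M (fun j => e (j / M)) x = e (⌊(M : ℝ) * x⌋₊ / M) := by
  have hM : (0 : ℝ) < M := by exact_mod_cast Nat.pos_of_neZero M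
  have hlt : ⌊(M : ℝ) * x⌋₊ < M :=
    (Nat.floor_lt (mul_nonneg hM.le hx.1)).2 (mul_lt_of_lt_one_right hM hx.2)
  simp only [cellStep, Fin.val_ofNat, Nat.mod_eq_of_lt hlt]

theorem measureReal_monotoneOn_ne_cellStep_le {κ : Type*} [LinearOrder κ] [Finite κ] {e : ℝ → κ}
    (he : MonotoneOn e (Ico 0 1)) (M : ℕ) [NeZero M] :
    μ01.real {x | e x ≠ cellStep M (fun j => e (j / M)) x} ≤ Nat.card κ / M := by
  refine le_trans (ENNReal.toReal_mono (measure_ne_top _ _) (measure_mono_ae ?_))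
    (measureReal_monotoneOn_ne_natFloor_le he (Nat.pos_of_neZero M))
  have hIco : ∀ᵐ x ∂μ01, x ∈ Ico (0 : ℝ) 1 := by
    rw [μ01, ← Measure.restrict_congr_set Ico_ae_eq_Icc]
    exact ae_restrict_mem measurableSet_Ico
  filter_upwards [hIco] with x hx hne
  exact ⟨hx, Ne.trans_eq hne (cellStep_of_mem_Ico e hx)⟩

/-- Finitely many codes suffice up to rearrangement and a small exceptional set: sorting the cells
makes a code monotone, and a monotone code is a step function on a grid of bounded size. -/
theorem exists_finite_codes (κ : Type*) [Finite κ] [MeasurableSpace κ]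
    [MeasurableSingletonClass κ] {δ : ℝ} (hδ : 0 < δ) :
    ∃ C : Set (ℝ → κ), C.Finite ∧ (∀ c ∈ C, Measurable c) ∧ ∀ c : ℝ → κ, Measurable c →
      ∃ φ, IsInvMeasurePreserving φ ∧ ∃ c' ∈ C, μ01.real {x | c (φ x) ≠ c' x} ≤ δ := by
  obtain ⟨K, ⟨f⟩⟩ := Finite.exists_equiv_fin κ
  let _ : LinearOrder κ := LinearOrder.lift' f f.injective
  obtain ⟨n, hn⟩ := exists_nat_gt (Nat.card κ / (δ / 2))
  have hcard : Nat.card κ / ((n + 1 : ℕ) : ℝ) ≤ δ / 2 := by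
    rw [div_lt_iff₀ (half_pos hδ)] at hn
    rw [div_le_iff₀' (by positivity)]
    push_cast
    linarith
  refine ⟨range (cellStep (n + 1)), finite_range _, ?_, fun c hc => ?_⟩
  · rintro _ ⟨g, rfl⟩
    exact measurable_cellStep (n + 1) g
  obtain ⟨φ, hφ, e, he, hce⟩ := exists_monotoneOn_rearrangement hc (half_pos hδ)
  refine ⟨φ, hφ, cellStep (n + 1) fun j => e (j / (n + 1 : ℕ)), mem_range_self _, ?_⟩
  calc μ01.real {x | c (φ x) ≠ cellStep (n + 1) (fun j => e (j / (n + 1 : ℕ))) x}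
      ≤ μ01.real ({x | c (φ x) ≠ e x} ∪
          {x | e x ≠ cellStep (n + 1) (fun j => e (j / (n + 1 : ℕ))) x}) :=
        measureReal_mono fun x hx => (ne_or_eq _ _).imp_right fun h => h.symm.trans_ne hx
    _ ≤ δ / 2 + δ / 2 := (measureReal_union_le _ _).trans <|
        add_le_add hce ((measureReal_monotoneOn_ne_cellStep_le he (n + 1)).trans hcard)
    _ = δ := add_halves δ

end Rearrangement

section Graphon

theorem exists_finite_cutClose_net {ε : ℝ} (hε : 0 < ε) :
    ∃ 𝒰 : Set (ℝ × ℝ → ℝ), 𝒰.Finite ∧ (∀ U ∈ 𝒰, Integrable U (μ01.prod μ01)) ∧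
      ∀ W, Measurable W → (∀ p, |W p| ≤ 1) → ∃ U ∈ 𝒰, CutClose ε U W := by
  obtain ⟨m, hm⟩ := exists_nat_gt (1 / (ε / 2) ^ 2)
  rw [div_lt_iff₀ (by positivity)] at hm
  have hm0 : (0 : ℝ) < m := by
    have : (0 : ℝ) < (ε / 2) ^ 2 := by positivity
    exact pos_of_mul_pos_left (one_pos.trans hm) this.le
  obtain ⟨C, hC, hCmeas, hcode⟩ :=
    exists_finite_codes (Fin m → Prop × Prop) (δ := 1 / (4 * m)) (by positivity)
  let H (s : Fin m → SignType) (c : ℝ → Fin m → Prop × Prop) (p : ℝ × ℝ) : ℝ :=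
    signedRectangleSum (ε / 2) s (c p.1) (c p.2)
  refine ⟨image2 H univ C, finite_univ.image2 H hC, ?_, fun W hW hW1 => ?_⟩
  · rintro _ ⟨s, -, c, hc, rfl⟩
    exact integrable_signedRectangleSum _ s (hCmeas c hc)
  obtain ⟨s, c, hc, hWc⟩ := exists_signedRectangleSum_cutNormLE (μ := μ01) hW hW1 (half_pos hε) hm
  obtain ⟨φ, hφ, c', hc', hcc'⟩ := hcode c hc
  have hWint : Integrable W (μ01.prod μ01) :=
    .of_bound hW.aestronglyMeasurable 1 (ae_of_all _ hW1)
  have hstep : CutNormLE (μ01.prod μ01) (H s (c ∘ φ) - H s c') (ε / 2) := by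
    refine (cutNormLE_step_sub_step (abs_signedRectangleSum_le (ε / 2) s) (c ∘ φ) c').mono ?_
    calc 2 * (|ε / 2| * m) * (2 * μ01.real {x | (c ∘ φ) x ≠ c' x})
        ≤ 2 * (|ε / 2| * m) * (2 * (1 / (4 * m))) := by gcongr; exact hcc'
      _ = ε / 2 := by
        rw [abs_of_pos (half_pos hε)]
        field_simp
        norm_num
  have hWcφ := hφ.cutNormLE_comp (hWint.sub (integrable_signedRectangleSum _ s hc)) hWc
  have hWc' := hWcφ.sub_trans (hφ.integrable_comp hWint)
    (integrable_signedRectangleSum _ s (hc.comp hφ.2.1.measurable))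
    (integrable_signedRectangleSum _ s (hCmeas c' hc')) hstep
  exact ⟨_, ⟨s, mem_univ s, c', hc', rfl⟩, φ, hφ, (hWc'.mono (add_halves ε).le).sub_comm⟩

theorem exists_cutNormLE_comp_sub_comp {U : ℕ → ℝ × ℝ → ℝ} {c : ℕ → ℝ}
    (hU : ∀ n, Integrable (U n) (μ01.prod μ01))
    (h : ∀ n, CutClose (c n - c (n + 1)) (U n) (U (n + 1))) :
    ∃ Φ : ℕ → ℝ → ℝ, (∀ n, IsInvMeasurePreserving (Φ n)) ∧ ∀ n m, n ≤ m →
      CutNormLE (μ01.prod μ01) (U n ∘ Prod.map (Φ n) (Φ n) - U m ∘ Prod.map (Φ m) (Φ m))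
        (c n - c m) := by
  choose φ hφ hφU using h
  let Φ (n : ℕ) : ℝ → ℝ := Nat.rec id (fun k f => φ k ∘ f) n
  have hΦ (n : ℕ) : IsInvMeasurePreserving (Φ n) := by
    induction n with
    | zero => exact .id
    | succ k ih => exact (hφ k).comp ih
  exact ⟨Φ, hΦ, fun n m => CutNormLE.sub_of_succ (fun n => (hΦ n).integrable_comp (hU n)) fun n =>
    (hΦ n).cutNormLE_comp ((hU n).sub ((hφ n).integrable_comp (hU (n + 1)))) (hφU n)⟩

namespace IsGraphon

variable {W : ℝ → ℝ → ℝ}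

theorem abs_uncurry_le_one (hW : IsGraphon W) (p : ℝ × ℝ) : |Function.uncurry W p| ≤ 1 :=
  abs_le.2 ⟨neg_one_lt_zero.le.trans (hW.2.2 p.1 p.2).1, (hW.2.2 p.1 p.2).2⟩

theorem integrable_uncurry (hW : IsGraphon W) :
    Integrable (Function.uncurry W) (μ01.prod μ01) :=
  .of_bound hW.1.aestronglyMeasurable 1 (ae_of_all _ hW.abs_uncurry_le_one)

theorem comp (hW : IsGraphon W) {φ : ℝ → ℝ} (hφ : Measurable φ) :
    IsGraphon fun x y => W (φ x) (φ y) :=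
  ⟨hW.1.comp (hφ.prodMap hφ), fun _ _ => hW.2.1 _ _, fun _ _ => hW.2.2 _ _⟩

theorem setIntegral_prod_comm (hW : IsGraphon W) (S T : Set ℝ) :
    ∫ p in S ×ˢ T, Function.uncurry W p ∂(μ01.prod μ01) =
      ∫ p in T ×ˢ S, Function.uncurry W p ∂(μ01.prod μ01) := by
  rw [← setIntegral_prod_swap]
  exact integral_congr_ae (ae_of_all _ fun p => hW.2.1 _ _)

theorem exists_tendsto_setIntegral_prod {ι : Type*} (l : Ultrafilter ι) {V : ι → ℝ → ℝ → ℝ}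
    (hV : ∀ i, IsGraphon (V i)) :
    ∃ L, IsGraphon L ∧ ∀ S T : Set ℝ, MeasurableSet S → MeasurableSet T →
      Tendsto (fun i => ∫ p in S ×ˢ T, Function.uncurry (V i) p ∂(μ01.prod μ01)) l
        (nhds (∫ p in S ×ˢ T, Function.uncurry L p ∂(μ01.prod μ01))) := by
  obtain ⟨F, hF, hFI, hlim⟩ := exists_tendsto_setIntegral_of_mem_Icc (μ := μ01.prod μ01) l
    zero_le_one (fun i => (hV i).1) fun i p => (hV i).2.2 p.1 p.2
  have hFint : Integrable F (μ01.prod μ01) :=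
    .of_bound hF.aestronglyMeasurable 1 <| ae_of_all _ fun p =>
      abs_le.2 ⟨neg_one_lt_zero.le.trans (hFI p).1, (hFI p).2⟩
  refine ⟨fun x y => (F (x, y) + F (y, x)) / 2, ⟨?_, fun x y => ?_, fun x y => ?_⟩,
    fun S T hS hT => ?_⟩
  · exact (hF.add (hF.comp measurable_swap)).div_const 2
  · exact congrArg (· / 2) (add_comm _ _)
  · constructor <;> linarith [(hFI (x, y)).1, (hFI (x, y)).2, (hFI (y, x)).1, (hFI (y, x)).2]
  have hsym : ∫ p in S ×ˢ T, (F p + F p.swap) / 2 ∂(μ01.prod μ01) =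
      ((∫ p in S ×ˢ T, F p ∂(μ01.prod μ01)) + ∫ p in T ×ˢ S, F p ∂(μ01.prod μ01)) / 2 := by
    rw [integral_div, ← setIntegral_prod_swap T S F]
    exact congrArg (· / 2) (integral_add hFint.integrableOn hFint.swap.integrableOn)
  have hlimL := ((hlim _ (hS.prod hT)).add (hlim _ (hT.prod hS))).div_const 2
  simp only [(hV _).setIntegral_prod_comm T S, add_self_div_two] at hlimL
  exact hsym ▸ hlimL

end IsGraphon

/-- The points of the graphon space: graphons are not identified when their cut distance is zero,
so that this is a pseudometric space. -/
structure Graphon where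
  toFun : ℝ → ℝ → ℝ
  isGraphon : IsGraphon toFun

namespace Graphon

noncomputable instance : PseudoMetricSpace Graphon where
  dist U V := cutDist U.toFun V.toFun
  dist_self U :=
    le_antisymm (CutClose.cutDist_le U.isGraphon.integrable_uncurry U.isGraphon.integrable_uncurry
      (.of_cutNormLE (CutNormLE.sub_self _))) (cutDist_nonneg _ _)
  dist_comm := by
    have hle (U V : Graphon) : cutDist U.toFun V.toFun ≤ cutDist V.toFun U.toFun := by
      have hU := U.isGraphon.integrable_uncurry
      have hV := V.isGraphon.integrable_uncurry
      exact le_of_forall_gt_imp_ge_of_dense fun r hr =>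
        ((CutClose.of_cutDist_lt hV hU hr).symm hV hU).cutDist_le hU hV
    exact fun U V => le_antisymm (hle U V) (hle V U)
  dist_triangle U V W := by
    have hU := U.isGraphon.integrable_uncurry
    have hV := V.isGraphon.integrable_uncurry
    have hW := W.isGraphon.integrable_uncurry
    refine le_of_forall_pos_le_add fun r hr => ?_
    have hUV := CutClose.of_cutDist_lt hU hV (lt_add_of_pos_right _ (half_pos hr))
    have hVW := CutClose.of_cutDist_lt hV hW (lt_add_of_pos_right _ (half_pos hr))
    linarith [(hUV.trans hU hV hW hVW).cutDist_le hU hW]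

theorem dist_le_of_cutClose {ε : ℝ} {U V : Graphon}
    (h : CutClose ε (Function.uncurry U.toFun) (Function.uncurry V.toFun)) : dist U V ≤ ε :=
  h.cutDist_le U.isGraphon.integrable_uncurry V.isGraphon.integrable_uncurry

theorem cutClose_of_dist_lt {ε : ℝ} {U V : Graphon} (h : dist U V < ε) :
    CutClose ε (Function.uncurry U.toFun) (Function.uncurry V.toFun) :=
  .of_cutDist_lt U.isGraphon.integrable_uncurry V.isGraphon.integrable_uncurry h

theorem totallyBounded_univ : TotallyBounded (univ : Set Graphon) := by
  refine Metric.totallyBounded_of_finite_discretization fun ε hε => ?_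
  obtain ⟨𝒰, h𝒰, hint, hnet⟩ := exists_finite_cutClose_net (ε := ε / 3) (by positivity)
  choose! F hF𝒰 hF using fun W : Graphon =>
    hnet (Function.uncurry W.toFun) W.isGraphon.1 W.isGraphon.abs_uncurry_le_one
  have := h𝒰.fintype
  refine ⟨𝒰, inferInstance, fun W => ⟨F W, hF𝒰 W⟩, fun V W hVW => ?_⟩
  have hV := V.1.isGraphon.integrable_uncurry
  have hW := W.1.isGraphon.integrable_uncurry
  have hU := hint _ (hF𝒰 V)
  have hUW := hF W
  rw [← show F V = F W from congrArg Subtype.val hVW] at hUW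
  linarith [dist_le_of_cutClose (((hF V).symm hU hV).trans hV hU hW hUW)]

theorem exists_dist_le_of_dist_succ_lt {U : ℕ → Graphon} {c : ℕ → ℝ} (hc : ∀ n, 0 ≤ c n)
    (hU : ∀ n, dist (U n) (U (n + 1)) < c n - c (n + 1)) : ∃ L, ∀ n, dist (U n) L ≤ c n := by
  have hUint (n : ℕ) := (U n).isGraphon.integrable_uncurry
  obtain ⟨Φ, hΦ, hΦU⟩ := exists_cutNormLE_comp_sub_comp hUint fun n => cutClose_of_dist_lt (hU n)
  obtain ⟨L, hL, hlim⟩ := IsGraphon.exists_tendsto_setIntegral_prod (hyperfilter ℕ)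
    fun n => (U n).isGraphon.comp (hΦ n).2.1.measurable
  refine ⟨⟨L, hL⟩, fun n => dist_le_of_cutClose ?_⟩
  have hVint (n : ℕ) := (hΦ n).integrable_comp (hUint n)
  have hVL := CutNormLE.sub_of_tendsto (hVint n) hVint hL.integrable_uncurry hlim <|
    ((eventually_ge_atTop n).filter_mono Nat.hyperfilter_le_atTop).mono fun m hnm =>
      (hΦU n m hnm).mono (sub_le_self _ (hc m))
  exact CutClose.symm hL.integrable_uncurry (hUint n) ⟨Φ n, hΦ n, hVL.sub_comm⟩

instance : CompleteSpace Graphon := by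
  refine Metric.complete_of_convergent_controlled_sequences (fun n => (1 / 2) ^ n)
    (fun n => by positivity) fun u hu => ?_
  obtain ⟨L, hL⟩ := exists_dist_le_of_dist_succ_lt (U := u) (c := fun n => 2 * (1 / 2) ^ n)
    (fun n => by positivity) fun n => (hu n n (n + 1) le_rfl n.le_succ).trans_eq (by ring)
  refine ⟨L, tendsto_iff_dist_tendsto_zero.2 (squeeze_zero (fun n => dist_nonneg) hL ?_)⟩
  simpa using (tendsto_pow_atTop_nhds_zero_of_lt_one (r := (1 / 2 : ℝ)) (by norm_num)
    (by norm_num)).const_mul 2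

instance : CompactSpace Graphon :=
  ⟨isCompact_iff_totallyBounded_isComplete.2 ⟨totallyBounded_univ, isComplete_univ⟩⟩

end Graphon

end Graphon

/-- Compactness of the space of graphons with the cut distance: every sequence of
graphons has a subsequence converging to some graphon in cut distance. -/
theorem graphon_space_compact (W : ℕ → ℝ → ℝ → ℝ) (hW : ∀ n, IsGraphon (W n)) :
    ∃ φ : ℕ → ℕ, StrictMono φ ∧ ∃ L : ℝ → ℝ → ℝ, IsGraphon L ∧
      Filter.Tendsto (fun j => cutDist (W (φ j)) L) Filter.atTop (nhds 0) := by
  obtain ⟨L, φ, hφ, hL⟩ := CompactSpace.tendsto_subseq fun n => Graphon.mk (W n) (hW n)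
  exact ⟨φ, hφ, L.toFun, L.isGraphon, tendsto_iff_dist_tendsto_zero.1 hL⟩
end
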